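/- Let d ≥ 1 and let n be a power of a prime. Let 𝓕 be a family of (d+1)·n hyperplanes in general position in ℝ^d. Then 𝓕 can be partitioned into n subfamilies of d+1 hyperplanes each, such that the n simplexes formed by the subfamilies have a common interior point, i.e., there exists a point b lying in the interior of every one of these n simplexes. -/

import Mathlib

open scoped InnerProductSpace

/-- A hyperplane in `ℝ^d`: the solution set of one nontrivial linear equation. -/
def IsHyperplane {d : ℕ} (h : Set (EuclideanSpace ℝ (Fin d))) : Prop :=
  ∃ (v : EuclideanSpace ℝ (Fin d)) (c : ℝ), v ≠ 0 ∧ h = {y | ⟪y, v⟫_ℝ = c}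

/-- A family of hyperplanes in `ℝ^d` is in general position if any `d` of them have
exactly one point in common and any `d+1` of them have no common point. -/
def InGeneralPosition {d n : ℕ} (H : Fin n → Set (EuclideanSpace ℝ (Fin d))) : Prop :=
  (∀ s : Finset (Fin n), s.card = d → ∃! x, ∀ i ∈ s, x ∈ H i) ∧
  (∀ s : Finset (Fin n), s.card = d + 1 → ¬ ∃ x, ∀ i ∈ s, x ∈ H i)

/-- The vertex set of the simplex formed by the subfamily `{i | c i = m}` of `d+1`
hyperplanes: for each member `i` of the subfamily, the (unique) common point of the
other `d` hyperplanes of the subfamily is a vertex. -/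
def SimplexVertices {d N n : ℕ} (H : Fin N → Set (EuclideanSpace ℝ (Fin d)))
    (c : Fin N → Fin n) (m : Fin n) : Set (EuclideanSpace ℝ (Fin d)) :=
  {x | ∃ i, c i = m ∧ ∀ j, c j = m → j ≠ i → x ∈ H j}



namespace DT
open Finset

section Cochains
variable {V F : Type*} [CommRing F]

/-- drop the `i`-th entry -/
def face (i : ℕ) (v : ℕ → V) : ℕ → V := fun j => if j < i then v j else v (j + 1)

/-- coboundary, from functions of `q` entries to functions of `q+1` entries -/
def dl (q : ℕ) (ψ : (ℕ → V) → F) : (ℕ → V) → F :=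
  fun v => ∑ i ∈ range (q + 1), (-1) ^ i * ψ (face i v)

/-- dependence on the first `q` entries only -/
def Loc (q : ℕ) (ψ : (ℕ → V) → F) : Prop :=
  ∀ v v' : ℕ → V, (∀ j < q, v j = v' j) → ψ v = ψ v'

def sh (q : ℕ) (v : ℕ → V) : ℕ → V := fun j => v (q + j)

def cup (q : ℕ) (A B : (ℕ → V) → F) : (ℕ → V) → F := fun v => A v * B (sh q v)

def spl (α β : V → V) (i : ℕ) (v : ℕ → V) : ℕ → V :=
  fun j => if j ≤ i then α (v j) else β (v (j - 1))

def Pr (α β : V → V) (q : ℕ) (Ψ : (ℕ → V) → F) : (ℕ → V) → F :=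
  fun v => ∑ i ∈ range q, (-1) ^ i * Ψ (spl α β i v)

theorem prism_sum (a g : ℕ → ℕ → F) (m : ℕ → F)
    (h1 : ∀ i l, l ≤ i → a (i + 1) l = g i l)
    (h2 : ∀ i, a i i = m i) (h3 : ∀ i, a i (i + 1) = m (i + 1))
    (h4 : ∀ i l, i < l → a i (l + 1) = g i l) (q : ℕ) :
    ∑ i ∈ range (q + 1), (-1 : F) ^ i * ∑ l ∈ range (q + 2), (-1 : F) ^ l * a i l =
      m 0 - m (q + 1) - ∑ l ∈ range (q + 1), (-1 : F) ^ l * ∑ i ∈ range q, (-1 : F) ^ i * g i l := by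
  induction q with
  | zero => simp [sum_range_succ, h2, h3]; ring
  | succ q ih =>
    have e1 : ∑ i ∈ range (q + 1 + 1), (-1 : F) ^ i * ∑ l ∈ range (q + 1 + 2), (-1 : F) ^ l * a i l
        = (∑ i ∈ range (q + 1), (-1 : F) ^ i * ∑ l ∈ range (q + 2), (-1 : F) ^ l * a i l)
          + (∑ i ∈ range (q + 1), (-1 : F) ^ i * ((-1 : F) ^ (q + 2) * a i (q + 2)))
          + (-1 : F) ^ (q + 1) * ∑ l ∈ range (q + 1 + 2), (-1 : F) ^ l * a (q + 1) l := by
      rw [sum_range_succ, ← sum_add_distrib]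
      congr 1
      apply sum_congr rfl
      intro i _
      rw [sum_range_succ _ (q + 2), mul_add]
    have e2 : ∑ l ∈ range (q + 1 + 2), (-1 : F) ^ l * a (q + 1) l =
        (∑ l ∈ range (q + 1), (-1 : F) ^ l * g q l) + (-1) ^ (q + 1) * m (q + 1)
          + (-1) ^ (q + 2) * m (q + 2) := by
      rw [sum_range_succ, sum_range_succ, h2, h3]
      congr 2
      apply sum_congr rfl
      intro l hl
      rw [h1 _ _ (by have := mem_range.1 hl; omega)]
    have e3 : ∑ i ∈ range (q + 1), (-1 : F) ^ i * ((-1 : F) ^ (q + 2) * a i (q + 2)) =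
        ∑ i ∈ range (q + 1), (-1 : F) ^ i * ((-1 : F) ^ (q + 2) * g i (q + 1)) := by
      apply sum_congr rfl
      intro i hi
      rw [h4 _ _ (by have := mem_range.1 hi; omega)]
    have e4 : ∑ l ∈ range (q + 1 + 1), (-1 : F) ^ l * ∑ i ∈ range (q + 1), (-1 : F) ^ i * g i l =
        (∑ l ∈ range (q + 1), (-1 : F) ^ l * ∑ i ∈ range q, (-1 : F) ^ i * g i l)
        + (∑ l ∈ range (q + 1), (-1 : F) ^ l * ((-1 : F) ^ q * g q l))
        + (-1 : F) ^ (q + 1) * ∑ i ∈ range (q + 1), (-1 : F) ^ i * g i (q + 1) := by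
      rw [sum_range_succ _ (q + 1), ← sum_add_distrib]
      congr 1
      apply sum_congr rfl
      intro i _
      rw [sum_range_succ _ q, mul_add]
    rw [e1, ih, e2, e3, e4]
    have e5 : ∑ i ∈ range (q + 1), (-1 : F) ^ i * ((-1 : F) ^ (q + 2) * g i (q + 1)) =
        (-1) ^ (q + 2) * ∑ i ∈ range (q + 1), (-1 : F) ^ i * g i (q + 1) := by
      rw [mul_sum]; apply sum_congr rfl; intros; ring
    have e6 : (∑ l ∈ range (q + 1), (-1 : F) ^ l * ((-1 : F) ^ q * g q l)) =
        (-1) ^ q * ∑ l ∈ range (q + 1), (-1 : F) ^ l * g q l := by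
      rw [mul_sum]; apply sum_congr rfl; intros; ring
    rw [e5, e6]
    have s : ((-1 : F) ^ q) * (-1) ^ q = 1 := by rw [← mul_pow]; simp
    linear_combination (m (q + 1) - m (q + 2)) * s

theorem Pr_dl (α β : V → V) (q : ℕ) (ψ : (ℕ → V) → F) (hψ : Loc (q + 1) ψ) (v : ℕ → V) :
    Pr α β (q + 1) (dl (q + 1) ψ) v + dl q (Pr α β q ψ) v =
      ψ (fun j => β (v j)) - ψ (fun j => α (v j)) := by
  have key := prism_sum (fun i l => ψ (face l (spl α β i v))) (fun i l => ψ (spl α β i (face l v)))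
    (fun i => ψ (fun j => if j < i then α (v j) else β (v j))) ?_ ?_ ?_ ?_ q
  · simp only [Pr, dl]
    rw [key]
    have h1 : ψ (fun j => if j < q + 1 then α (v j) else β (v j)) = ψ (fun j => α (v j)) :=
      hψ _ _ (fun j hj => by simp [hj])
    simp only [Nat.not_lt_zero, if_false]
    rw [h1]; ring
  · intro i l h
    congr 1; funext j
    simp only [face, spl]
    split_ifs <;> first | rfl | omega | (congr 2; omega)
  · intro i
    congr 1; funext j
    simp only [face, spl]
    split_ifs <;> first | rfl | omega | (congr 2; omega)
  · intro i
    congr 1; funext j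
    simp only [face, spl]
    split_ifs <;> first | rfl | omega | (congr 2; omega)
  · intro i l h
    congr 1; funext j
    simp only [face, spl]
    split_ifs <;> first | rfl | omega | (congr 2; omega)

theorem dl_cup (a b : ℕ) (A B : (ℕ → V) → F) (hA : Loc (a + 1) A) (v : ℕ → V) :
    dl (a + b + 1) (cup a A B) v =
      cup (a + 1) (dl (a + 1) A) B v + (-1) ^ a * cup a A (dl (b + 1) B) v := by
  have e0 : a + b + 1 + 1 = (a + 1) + (b + 1) := by ring
  simp only [dl, cup]
  rw [e0, sum_range_add, sum_range_succ _ (a + 1), sum_range_succ' _ (b + 1)]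
  have h1 : ∀ i ∈ range (a + 1), (-1 : F) ^ i * (A (face i v) * B (sh a (face i v))) =
      (-1) ^ i * A (face i v) * B (sh (a + 1) v) := by
    intro i hi
    have : sh a (face i v) = sh (a + 1) v := by
      funext j; simp only [sh, face]; have := mem_range.1 hi
      rw [if_neg (by omega)]; congr 1; omega
    rw [this]; ring
  have h2 : ∀ i ∈ range (b + 1), (-1 : F) ^ (a + 1 + i) *
      (A (face (a + 1 + i) v) * B (sh a (face (a + 1 + i) v))) =
      (-1) ^ a * (A v * ((-1) ^ (i + 1) * B (face (i + 1) (sh a v)))) := by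
    intro i hi
    have e1 : sh a (face (a + 1 + i) v) = face (i + 1) (sh a v) := by
      funext j; simp only [sh, face]
      split_ifs <;> first | rfl | omega | (congr 1)
    have e2 : A (face (a + 1 + i) v) = A v := hA _ _ (fun j hj => by
      simp only [face]; rw [if_pos (by omega)])
    rw [e1, e2]; ring
  rw [sum_congr rfl h1, sum_congr rfl h2, ← sum_mul]
  have e3 : A (face (a + 1) v) = A v := hA _ _ (fun j hj => by
      simp only [face]; rw [if_pos (by omega)])
  have e4 : face 0 (sh a v) = sh (a + 1) v := by
    funext j; simp only [sh, face]; rw [if_neg (by omega)]; congr 1; omega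
  rw [e3, e4, ← mul_sum, ← mul_sum]
  ring

end Cochains
end DT

namespace DT
open Finset

section LocLemmas
variable {V F : Type*} [CommRing F]

theorem Loc.mono {q q' : ℕ} {ψ : (ℕ → V) → F} (h : Loc q ψ) (hq : q ≤ q') : Loc q' ψ :=
  fun v v' hv => h v v' (fun j hj => hv j (lt_of_lt_of_le hj hq))

theorem loc_Pr (α β : V → V) (q : ℕ) {Ψ : (ℕ → V) → F} (h : Loc (q + 1) Ψ) :
    Loc q (Pr α β q Ψ) := by
  intro v v' hv
  unfold Pr
  apply sum_congr rfl
  intro i hi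
  have hi := mem_range.1 hi
  congr 1
  apply h
  intro j hj
  simp only [spl]
  split_ifs with hji
  · rw [hv j (by omega)]
  · rw [hv (j - 1) (by omega)]

theorem loc_cup {a b : ℕ} {A B : (ℕ → V) → F} (hA : Loc (a + 1) A) (hB : Loc b B) (hb : 0 < b) :
    Loc (a + b) (cup a A B) := by
  intro v v' hv
  unfold cup
  rw [hA v v' (fun j hj => hv j (by omega)), hB (sh a v) (sh a v') (fun j hj => hv _ (by omega))]

theorem face_comp {V' : Type*} (f : V → V') (i : ℕ) (v : ℕ → V) :
    face i (fun a => f (v a)) = fun a => f (face i v a) := by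
  funext j; simp only [face]; split_ifs <;> rfl

theorem sh_comp {V' : Type*} (f : V → V') (i : ℕ) (v : ℕ → V) :
    sh i (fun a => f (v a)) = fun a => f (sh i v a) := rfl

theorem dl_comp {V' : Type*} (f : V → V') (q : ℕ) (ψ : (ℕ → V') → F) (v : ℕ → V) :
    dl q (fun v => ψ (fun a => f (v a))) v = dl q ψ (fun a => f (v a)) := by
  unfold dl
  simp only [face_comp]

theorem dl_add (q : ℕ) (ψ ψ' : (ℕ → V) → F) : dl q (ψ + ψ') = dl q ψ + dl q ψ' := by
  funext v; simp [dl, mul_add, sum_add_distrib]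

theorem dl_smul (q : ℕ) (c : F) (ψ : (ℕ → V) → F) : dl q (c • ψ) = c • dl q ψ := by
  funext v; simp only [dl, Pi.smul_apply, smul_eq_mul, mul_sum]
  apply sum_congr rfl; intros; ring

theorem dl_neg (q : ℕ) (ψ : (ℕ → V) → F) : dl q (-ψ) = - dl q ψ := by
  funext v; simp [dl]

theorem dl_zero (q : ℕ) : dl q (0 : (ℕ → V) → F) = 0 := by
  funext v; simp [dl]

theorem Pr_add (α β : V → V) (q : ℕ) (ψ ψ' : (ℕ → V) → F) :
    Pr α β q (ψ + ψ') = Pr α β q ψ + Pr α β q ψ' := by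
  funext v; simp [Pr, mul_add, sum_add_distrib]

theorem Pr_smul (α β : V → V) (q : ℕ) (c : F) (ψ : (ℕ → V) → F) :
    Pr α β q (c • ψ) = c • Pr α β q ψ := by
  funext v; simp only [Pr, Pi.smul_apply, smul_eq_mul, mul_sum]
  apply sum_congr rfl; intros; ring

end LocLemmas

section Ops
variable {p : ℕ} [Fact p.Prime] {V : Type*}

def opN (a : ZMod p → V → V) (Ψ : (ℕ → V) → ZMod p) : (ℕ → V) → ZMod p :=
  fun v => ∑ t : ZMod p, Ψ (fun i => a t (v i))

def opD (a : ZMod p → V → V) (Ψ : (ℕ → V) → ZMod p) : (ℕ → V) → ZMod p :=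
  fun v => Ψ (fun i => a 1 (v i)) - Ψ v

theorem opN_add (a : ZMod p → V → V) (Ψ Φ : (ℕ → V) → ZMod p) :
    opN a (Ψ + Φ) = opN a Ψ + opN a Φ := by
  funext v; simp [opN, sum_add_distrib]

theorem opN_smul (a : ZMod p → V → V) (c : ZMod p) (Ψ : (ℕ → V) → ZMod p) :
    opN a (c • Ψ) = c • opN a Ψ := by
  funext v; simp [opN, mul_sum]

theorem opD_add (a : ZMod p → V → V) (Ψ Φ : (ℕ → V) → ZMod p) :
    opD a (Ψ + Φ) = opD a Ψ + opD a Φ := by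
  funext v; simp [opD]; ring

theorem opD_smul (a : ZMod p → V → V) (c : ZMod p) (Ψ : (ℕ → V) → ZMod p) :
    opD a (c • Ψ) = c • opD a Ψ := by
  funext v; simp [opD]; ring

theorem loc_opN (a : ZMod p → V → V) {q : ℕ} {Ψ : (ℕ → V) → ZMod p} (h : Loc q Ψ) :
    Loc q (opN a Ψ) := by
  intro v v' hv
  unfold opN
  exact sum_congr rfl (fun t _ => h _ _ (fun j hj => by simp only [hv j hj]))

theorem loc_opD (a : ZMod p → V → V) {q : ℕ} {Ψ : (ℕ → V) → ZMod p} (h : Loc q Ψ) :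
    Loc q (opD a Ψ) := by
  intro v v' hv
  unfold opD
  rw [h v v' hv, h (fun i => a 1 (v i)) (fun i => a 1 (v' i)) (fun j hj => by simp only [hv j hj])]

theorem dl_opN (a : ZMod p → V → V) (q : ℕ) (Ψ : (ℕ → V) → ZMod p) :
    dl q (opN a Ψ) = opN a (dl q Ψ) := by
  funext v
  simp only [dl, opN, face_comp, mul_sum]
  exact sum_comm

theorem dl_opD (a : ZMod p → V → V) (q : ℕ) (Ψ : (ℕ → V) → ZMod p) :
    dl q (opD a Ψ) = opD a (dl q Ψ) := by
  funext v
  simp only [dl, opD, face_comp, mul_sub, sum_sub_distrib]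

theorem sum_const_zmod (c : ZMod p) : ∑ _t : ZMod p, c = 0 := by
  simp [ZMod.card]

theorem sum_shift (f : ZMod p → ZMod p) (s : ZMod p) : ∑ t : ZMod p, f (t + s) = ∑ t, f t :=
  Fintype.sum_equiv (Equiv.addRight s) _ _ (fun _ => rfl)

variable (a : ZMod p → V → V)

theorem opN_shift (ha : ∀ s t u, a s (a t u) = a (s + t) u) (Ψ : (ℕ → V) → ZMod p) (s : ZMod p) (v : ℕ → V) :
    opN a Ψ (fun i => a s (v i)) = opN a Ψ v := by
  unfold opN
  simp only [ha]
  exact sum_shift (fun t => Ψ (fun i => a t (v i))) s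

theorem opN_opN (ha : ∀ s t u, a s (a t u) = a (s + t) u) (Ψ : (ℕ → V) → ZMod p) : opN a (opN a Ψ) = 0 := by
  funext v
  have : opN a (opN a Ψ) v = ∑ t : ZMod p, opN a Ψ v := by
    conv_lhs => unfold opN
    exact sum_congr rfl (fun t _ => opN_shift a ha Ψ t v)
  rw [this, sum_const_zmod]; rfl

theorem opD_opN (ha : ∀ s t u, a s (a t u) = a (s + t) u) (Ψ : (ℕ → V) → ZMod p) : opD a (opN a Ψ) = 0 := by
  funext v
  unfold opD
  rw [opN_shift a ha]; simp

theorem opN_opD (ha : ∀ s t u, a s (a t u) = a (s + t) u) (Ψ : (ℕ → V) → ZMod p) : opN a (opD a Ψ) = 0 := by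
  funext v
  unfold opD opN
  simp only [ha, sum_sub_distrib]
  have := sum_shift (fun t => Ψ (fun i => a t (v i))) 1
  simp only [add_comm _ (1 : ZMod p)] at this
  rw [this]; simp

theorem opN_inv (Ψ : (ℕ → V) → ZMod p) (h : ∀ t v, Ψ (fun i => a t (v i)) = Ψ v) :
    opN a Ψ = 0 := by
  funext v; unfold opN; simp only [h]; rw [sum_const_zmod]; rfl

theorem opN_comm (b : ZMod p → V → V) (hab : ∀ s t u, a s (b t u) = b t (a s u))
    (Ψ : (ℕ → V) → ZMod p) : opN a (opN b Ψ) = opN b (opN a Ψ) := by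
  funext v; unfold opN; rw [sum_comm]; simp only [hab]

theorem opN_opD_comm (b : ZMod p → V → V) (hab : ∀ s t u, a s (b t u) = b t (a s u))
    (Ψ : (ℕ → V) → ZMod p) : opN a (opD b Ψ) = opD b (opN a Ψ) := by
  funext v; unfold opN opD; simp only [hab, sum_sub_distrib]

theorem opN_Pr_comm (α β : V → V) (hα : ∀ t u, α (a t u) = a t (α u))
    (hβ : ∀ t u, β (a t u) = a t (β u)) (q : ℕ)
    (Ψ : (ℕ → V) → ZMod p) : opN a (Pr α β q Ψ) = Pr α β q (opN a Ψ) := by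
  funext v; unfold opN Pr
  rw [sum_comm]
  apply sum_congr rfl; intro i _
  rw [mul_sum]
  apply sum_congr rfl; intro t _
  congr 2
  funext j; simp only [spl]; split_ifs <;> simp [hα, hβ]

end Ops
end DT

namespace DT
open Finset

section Words
variable {p : ℕ} [Fact p.Prime] {k M : ℕ}

def actG (j : Fin k) (t : ZMod p) (g : Fin k → ZMod p) : Fin k → ZMod p := g + Pi.single j t

def cG (j : Fin k) (g : Fin k → ZMod p) : Fin k → ZMod p := Function.update g j 0

theorem actG_actG (j : Fin k) (s t : ZMod p) (g : Fin k → ZMod p) :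
    actG j s (actG j t g) = actG j (s + t) g := by
  unfold actG; rw [Pi.single_add]; abel

theorem actG_comm (i j : Fin k) (s t : ZMod p) (g : Fin k → ZMod p) :
    actG i s (actG j t g) = actG j t (actG i s g) := by
  unfold actG; abel

theorem cG_actG_self (j : Fin k) (t : ZMod p) (g : Fin k → ZMod p) :
    cG j (actG j t g) = cG j g := by
  funext i
  by_cases h : i = j
  · subst h; simp [cG]
  · simp [cG, actG, h]

theorem cG_actG_ne {i j : Fin k} (hij : i ≠ j) (t : ZMod p) (g : Fin k → ZMod p) :
    cG j (actG i t g) = actG i t (cG j g) := by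
  funext l
  by_cases h : l = j
  · subst h; simp [cG, actG, Pi.single_apply, hij.symm]
  · simp [cG, actG, h]

def actW (j : Fin k) (t : ZMod p) (u : Fin M → Fin k → ZMod p) : Fin M → Fin k → ZMod p :=
  fun x => actG j t (u x)

def HW (j : Fin k) (y : ℕ) (u : Fin M → Fin k → ZMod p) : Fin M → Fin k → ZMod p :=
  fun x => if y ≤ x.1 then cG j (u x) else u x

theorem actW_actW (j : Fin k) (s t : ZMod p) (u : Fin M → Fin k → ZMod p) :
    actW j s (actW j t u) = actW j (s + t) u := by
  funext x; simp [actW, actG_actG]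

theorem actW_comm (i j : Fin k) (s t : ZMod p) (u : Fin M → Fin k → ZMod p) :
    actW i s (actW j t u) = actW j t (actW i s u) := by
  funext x; simp only [actW]; rw [actG_comm]

theorem HW_zero_actW (j : Fin k) (t : ZMod p) (u : Fin M → Fin k → ZMod p) :
    HW j 0 (actW j t u) = HW j 0 u := by
  funext x; simp [HW, actW, cG_actG_self]

theorem HW_top (j : Fin k) (u : Fin M → Fin k → ZMod p) : HW j M u = u := by
  funext x; have := x.2; simp [HW, this]

theorem HW_actW_ne {i j : Fin k} (hij : i ≠ j) (y : ℕ) (t : ZMod p) (u : Fin M → Fin k → ZMod p) :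
    HW j y (actW i t u) = actW i t (HW j y u) := by
  funext x; simp only [HW, actW]; split_ifs
  · rw [cG_actG_ne hij]
  · rfl

def BW (j : Fin k) (q : ℕ) (Ψ : (ℕ → Fin M → Fin k → ZMod p) → ZMod p) :
    (ℕ → Fin M → Fin k → ZMod p) → ZMod p :=
  fun v => ∑ y ∈ range M, Pr (HW j (y + 1)) (HW j y) q Ψ v

theorem loc_BW (j : Fin k) (q : ℕ) {Ψ : (ℕ → Fin M → Fin k → ZMod p) → ZMod p}
    (h : Loc (q + 1) Ψ) : Loc q (BW j q Ψ) := by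
  intro v v' hv
  exact sum_congr rfl (fun y _ => loc_Pr _ _ q h v v' hv)

theorem BW_zero (j : Fin k) (Ψ : (ℕ → Fin M → Fin k → ZMod p) → ZMod p) : BW j 0 Ψ = 0 := by
  funext v; simp [BW, Pr]

theorem BW_add (j : Fin k) (q : ℕ) (Ψ Φ : (ℕ → Fin M → Fin k → ZMod p) → ZMod p) :
    BW j q (Ψ + Φ) = BW j q Ψ + BW j q Φ := by
  funext v; simp [BW, Pr_add, sum_add_distrib]

theorem BW_smul (j : Fin k) (q : ℕ) (c : ZMod p) (Ψ : (ℕ → Fin M → Fin k → ZMod p) → ZMod p) :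
    BW j q (c • Ψ) = c • BW j q Ψ := by
  funext v; simp [BW, Pr_smul, mul_sum]

theorem BW_dl (j : Fin k) (q : ℕ) (ψ : (ℕ → Fin M → Fin k → ZMod p) → ZMod p)
    (hψ : Loc (q + 1) ψ) :
    BW j (q + 1) (dl (q + 1) ψ) =
      (fun v => ψ (fun i => HW j 0 (v i))) + (-1 : ZMod p) • ψ +
        (-1 : ZMod p) • dl q (BW j q ψ) := by
  funext v
  have h : dl q (BW j q ψ) v = ∑ y ∈ range M, dl q (Pr (HW j (y + 1)) (HW j y) q ψ) v := by
    simp only [dl, BW, mul_sum]; exact sum_comm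
  have h2 : ∀ y, Pr (HW j (y + 1)) (HW j y) (q + 1) (dl (q + 1) ψ) v =
      (ψ (fun i => HW j y (v i)) - ψ (fun i => HW j (y + 1) (v i)))
       - dl q (Pr (HW j (y + 1)) (HW j y) q ψ) v := fun y => by
    rw [← Pr_dl _ _ _ _ hψ v]; ring
  simp only [Pi.add_apply, Pi.smul_apply, smul_eq_mul]
  rw [h]
  simp only [BW, h2, sum_sub_distrib]
  rw [← sum_sub_distrib, sum_range_sub']
  simp only [HW_top]
  ring

theorem opN_BW_comm {i j : Fin k} (hij : i ≠ j) (q : ℕ)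
    (Ψ : (ℕ → Fin M → Fin k → ZMod p) → ZMod p) :
    opN (actW i) (BW j q Ψ) = BW j q (opN (actW i) Ψ) := by
  funext v
  have : ∀ y, opN (actW i) (Pr (HW j (y + 1)) (HW j y) q Ψ) v =
      Pr (HW j (y + 1)) (HW j y) q (opN (actW i) Ψ) v := fun y => by
    rw [opN_Pr_comm (actW i) _ _ (fun t u => HW_actW_ne hij _ t u) (fun t u => HW_actW_ne hij _ t u)]
  simp only [BW, ← this]
  simp only [opN]
  exact sum_comm

theorem opN_H0 (j : Fin k) (ψ : (ℕ → Fin M → Fin k → ZMod p) → ZMod p) :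
    opN (actW j) (fun v => ψ (fun i => HW j 0 (v i))) = 0 :=
  opN_inv _ _ (fun t v => by simp only [HW_zero_actW])

theorem opD_H0 (j : Fin k) (ψ : (ℕ → Fin M → Fin k → ZMod p) → ZMod p) :
    opD (actW j) (fun v => ψ (fun i => HW j 0 (v i))) = 0 := by
  funext v; simp [opD, HW_zero_actW]

/-- smallness -/
def cuts (u : Fin M → Fin k → ZMod p) : Finset (Fin M) :=
  univ.filter fun x => ∃ h : x.1 + 1 < M, u x ≠ u ⟨x.1 + 1, h⟩

def diffs (u u' : Fin M → Fin k → ZMod p) : Finset (Fin M) := univ.filter fun x => u x ≠ u' x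

def Sm (s : ℕ) (v : ℕ → Fin M → Fin k → ZMod p) : Prop :=
  (∀ a b, (diffs (v a) (v b)).card ≤ s) ∧ ∀ a, (cuts (v a)).card ≤ s

def Van (s : ℕ) (Ψ : (ℕ → Fin M → Fin k → ZMod p) → ZMod p) : Prop := ∀ v, Sm s v → Ψ v = 0

theorem Sm_act (j : Fin k) (t : ZMod p) {s : ℕ} {v : ℕ → Fin M → Fin k → ZMod p} (h : Sm s v) :
    Sm s (fun i => actW j t (v i)) := by
  have e : ∀ g g' : Fin k → ZMod p, actG j t g = actG j t g' ↔ g = g' := by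
    intro g g'; simp [actG]
  refine ⟨fun a b => ?_, fun a => ?_⟩
  · convert h.1 a b using 2
    simp [diffs, actW, e]
  · convert h.2 a using 2
    simp [cuts, actW, e]

theorem van_opN (j : Fin k) {s : ℕ} {Ψ : (ℕ → Fin M → Fin k → ZMod p) → ZMod p} (h : Van s Ψ) :
    Van s (opN (actW j) Ψ) := by
  intro v hv
  exact sum_eq_zero (fun t _ => h _ (Sm_act j t hv))

theorem van_opD (j : Fin k) {s : ℕ} {Ψ : (ℕ → Fin M → Fin k → ZMod p) → ZMod p} (h : Van s Ψ) :
    Van s (opD (actW j) Ψ) := by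
  intro v hv
  unfold opD
  rw [h _ hv, h _ (Sm_act j 1 hv)]; simp

theorem cuts_HW (j : Fin k) (y : ℕ) (u : Fin M → Fin k → ZMod p) :
    (cuts (HW j y u)).card ≤ (cuts u).card + 1 := by
  have : cuts (HW j y u) ⊆ cuts u ∪ univ.filter (fun x : Fin M => x.1 + 1 = y) := by
    intro x hx
    simp only [cuts, mem_filter, mem_univ, true_and, mem_union] at hx ⊢
    obtain ⟨h, hx⟩ := hx
    by_contra hcon
    push Not at hcon
    have h1 := hcon.1 h
    simp only [HW] at hx
    have := hcon.2
    rw [← h1] at hx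
    apply hx
    split_ifs <;> first | rfl | omega
  refine (card_le_card this).trans ((card_union_le _ _).trans ?_)
  gcongr
  rw [card_le_one]
  intro a ha b hb
  simp only [mem_filter, mem_univ, true_and] at ha hb
  ext; omega

theorem diffs_HW (j : Fin k) (y y' : ℕ) (hy : y' = y ∨ y' = y + 1 ∨ y = y' + 1)
    (u u' : Fin M → Fin k → ZMod p) :
    (diffs (HW j y u) (HW j y' u')).card ≤ (diffs u u').card + 1 := by
  have : diffs (HW j y u) (HW j y' u') ⊆ diffs u u' ∪ univ.filter (fun x : Fin M => x.1 = min y y') := by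
    intro x hx
    simp only [diffs, mem_filter, mem_univ, true_and, mem_union] at hx ⊢
    by_contra hcon
    push Not at hcon
    have h1 := hcon.1
    simp only [HW] at hx
    have := hcon.2
    rw [← h1] at hx
    apply hx
    split_ifs <;> first | rfl | omega
  refine (card_le_card this).trans ((card_union_le _ _).trans ?_)
  gcongr
  rw [card_le_one]
  intro a ha b hb
  simp only [mem_filter, mem_univ, true_and] at ha hb
  ext; omega

theorem van_BW (j : Fin k) (q : ℕ) {s : ℕ} {Ψ : (ℕ → Fin M → Fin k → ZMod p) → ZMod p}
    (h : Van (s + 1) Ψ) : Van s (BW j q Ψ) := by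
  intro v hv
  refine sum_eq_zero (fun y _ => sum_eq_zero (fun i _ => ?_))
  rw [h, mul_zero]
  have : ∀ a, ∃ b y', (y' = y ∨ y' = y + 1) ∧
      spl (HW j (y + 1)) (HW j y) i v a = HW j y' (v b) := by
    intro a
    simp only [spl]
    split_ifs
    · exact ⟨a, y + 1, Or.inr rfl, rfl⟩
    · exact ⟨a - 1, y, Or.inl rfl, rfl⟩
  refine ⟨fun a b => ?_, fun a => ?_⟩
  · obtain ⟨a', y1, h1, e1⟩ := this a
    obtain ⟨b', y2, h2, e2⟩ := this b
    rw [e1, e2]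
    refine (diffs_HW j y1 y2 (by omega) _ _).trans ?_
    have := hv.1 a' b'; omega
  · obtain ⟨a', y1, h1, e1⟩ := this a
    rw [e1]
    refine (cuts_HW j y1 _).trans ?_
    have := hv.2 a'; omega

end Words
end DT

namespace DT
open Finset

section GLevel
variable {p : ℕ} [Fact p.Prime] {k M : ℕ}

/-- vanishing on degenerate tuples -/
def Nrm {V : Type*} (q : ℕ) (Φ : (ℕ → V) → ZMod p) : Prop :=
  ∀ v : ℕ → V, ∀ a < q, v a = v (a + 1) → Φ v = 0

def BG (j : Fin k) (q : ℕ) (Φ : (ℕ → Fin k → ZMod p) → ZMod p) :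
    (ℕ → Fin k → ZMod p) → ZMod p := Pr id (cG j) q Φ

theorem BG_add (j : Fin k) (q : ℕ) (Ψ Φ : (ℕ → Fin k → ZMod p) → ZMod p) :
    BG j q (Ψ + Φ) = BG j q Ψ + BG j q Φ := Pr_add _ _ _ _ _

theorem BG_smul (j : Fin k) (q : ℕ) (c : ZMod p) (Ψ : (ℕ → Fin k → ZMod p) → ZMod p) :
    BG j q (c • Ψ) = c • BG j q Ψ := Pr_smul _ _ _ _ _

theorem nrm_BG (j : Fin k) (q : ℕ) {Φ : (ℕ → Fin k → ZMod p) → ZMod p} (h : Nrm (q + 1) Φ) :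
    Nrm q (BG j (q + 1) Φ) := by
  intro v a ha hv
  unfold BG Pr
  refine sum_eq_zero (fun i _ => ?_)
  by_cases hi : a + 1 ≤ i
  · rw [h _ a (by omega), mul_zero]
    simp only [spl]
    rw [if_pos (by omega), if_pos hi, hv]
  · rw [h _ (a + 1) (by omega), mul_zero]
    simp only [spl]
    rw [if_neg (by omega), if_neg (by omega)]
    simp [hv]

theorem nrm_opN (j : Fin k) {q : ℕ} {Φ : (ℕ → Fin k → ZMod p) → ZMod p} (h : Nrm q Φ) :
    Nrm q (opN (actG j) Φ) := by
  intro v a ha hv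
  exact sum_eq_zero (fun t _ => h _ a ha (by simp only [hv]))

theorem nrm_opD (j : Fin k) {q : ℕ} {Φ : (ℕ → Fin k → ZMod p) → ZMod p} (h : Nrm q Φ) :
    Nrm q (opD (actG j) Φ) := by
  intro v a ha hv
  unfold opD
  rw [h _ a ha hv, h _ a ha (by simp only [hv])]; simp

/-- pull back along the first letter -/
def pb (hM : 0 < M) (Φ : (ℕ → Fin k → ZMod p) → ZMod p) :
    (ℕ → Fin M → Fin k → ZMod p) → ZMod p :=
  fun v => Φ (fun i => v i ⟨0, hM⟩)

theorem opN_pb (hM : 0 < M) (j : Fin k) (Φ : (ℕ → Fin k → ZMod p) → ZMod p) :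
    opN (actW j) (pb hM Φ) = pb hM (opN (actG j) Φ) := rfl

theorem opD_pb (hM : 0 < M) (j : Fin k) (Φ : (ℕ → Fin k → ZMod p) → ZMod p) :
    opD (actW j) (pb hM Φ) = pb hM (opD (actG j) Φ) := rfl

theorem BW_pb (hM : 0 < M) (j : Fin k) (q : ℕ) {Φ : (ℕ → Fin k → ZMod p) → ZMod p}
    (h : Nrm (q + 1) Φ) : BW j (q + 1) (pb hM Φ) = pb hM (BG j (q + 1) Φ) := by
  funext v
  obtain ⟨M, rfl⟩ : ∃ M', M = M' + 1 := ⟨M - 1, by omega⟩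
  unfold BW
  rw [sum_range_succ', sum_eq_zero, zero_add]
  · simp only [pb, BG, Pr]
    apply sum_congr rfl
    intro i _
    congr 2
    funext a
    simp only [spl]
    split_ifs <;> simp [HW]
  · intro y _
    refine sum_eq_zero (fun i hi => ?_)
    have hi := mem_range.1 hi
    unfold pb
    rw [h _ i (by omega), mul_zero]
    simp [spl, HW]

/-- cup rule -/
theorem BG_cup (j : Fin k) (q b : ℕ) {Θ η : (ℕ → Fin k → ZMod p) → ZMod p} (hΘ : Loc (q + 1) Θ) :
    BG j (q + b) (cup q Θ η) =
      cup (q - 1) (BG j q Θ) (fun v => η (fun i => cG j (v i))) +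
        ((-1 : ZMod p) ^ q) • cup q Θ (BG j b η) := by
  funext v
  simp only [BG, Pr, cup, Pi.add_apply, Pi.smul_apply, smul_eq_mul]
  rw [sum_range_add, sum_mul, mul_sum, mul_sum]
  congr 1
  · apply sum_congr rfl
    intro i hi
    have hi := mem_range.1 hi
    rw [mul_assoc]
    congr 3
    funext l
    simp only [sh, spl]
    rw [if_neg (by omega)]
    congr 2; omega
  · apply sum_congr rfl
    intro i hi
    rw [hΘ (spl id (cG j) (q + i) v) v (fun l hl => by simp only [spl]; rw [if_pos (by omega)]; rfl)]
    have : sh q (spl id (cG j) (q + i) v) = spl id (cG j) i (sh q v) := by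
      funext l
      simp only [sh, spl]
      split_ifs with h1 h2 h2
      · rfl
      · omega
      · omega
      · congr 2; omega
    rw [this]; ring

theorem BG_zero (j : Fin k) (Ψ : (ℕ → Fin k → ZMod p) → ZMod p) : BG j 0 Ψ = 0 := by
  funext v; simp [BG, Pr]

theorem loc_BG (j : Fin k) (q : ℕ) {Ψ : (ℕ → Fin k → ZMod p) → ZMod p}
    (h : Loc (q + 1) Ψ) : Loc q (BG j q Ψ) := loc_Pr _ _ q h

def InvG (Φ : (ℕ → Fin k → ZMod p) → ZMod p) : Prop :=
  ∀ j t v, Φ (fun i => actG j t (v i)) = Φ v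

def InvW (Φ : (ℕ → Fin M → Fin k → ZMod p) → ZMod p) : Prop :=
  ∀ j t v, Φ (fun i => actW j t (v i)) = Φ v

theorem opN_cup_right (j : Fin k) (q : ℕ) {Θ η : (ℕ → Fin k → ZMod p) → ZMod p}
    (h : ∀ t v, η (fun i => actG j t (v i)) = η v) :
    opN (actG j) (cup q Θ η) = cup q (opN (actG j) Θ) η := by
  funext v
  simp only [opN, cup, sum_mul, sh_comp, h]

theorem opD_cup_right (j : Fin k) (q : ℕ) {Θ η : (ℕ → Fin k → ZMod p) → ZMod p}
    (h : ∀ t v, η (fun i => actG j t (v i)) = η v) :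
    opD (actG j) (cup q Θ η) = cup q (opD (actG j) Θ) η := by
  funext v
  simp only [opD, cup, sub_mul, sh_comp, h]

theorem opN_cup_left (j : Fin k) (q : ℕ) {Θ η : (ℕ → Fin k → ZMod p) → ZMod p}
    (h : InvG Θ) :
    opN (actG j) (cup q Θ η) = cup q Θ (opN (actG j) η) := by
  funext v
  simp only [opN, cup, mul_sum, sh_comp, h j]

theorem opD_cup_left (j : Fin k) (q : ℕ) {Θ η : (ℕ → Fin k → ZMod p) → ZMod p}
    (h : InvG Θ) :
    opD (actG j) (cup q Θ η) = cup q Θ (opD (actG j) η) := by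
  funext v
  simp only [opD, cup, mul_sub, sh_comp, h j]

end GLevel

/-- Abstract data of the two versions (`D = 1` for `p = 2`, `D = 2` for odd `p`). -/
structure StepData (p k M : ℕ) [Fact p.Prime] (hM : 0 < M) (D : ℕ) where
  AW : Fin k → ℕ → ((ℕ → Fin M → Fin k → ZMod p) → ZMod p) →
    ((ℕ → Fin M → Fin k → ZMod p) → ZMod p)
  AG : Fin k → ℕ → ((ℕ → Fin k → ZMod p) → ZMod p) → ((ℕ → Fin k → ZMod p) → ZMod p)
  y : (ℕ → ZMod p) → ZMod p
  D_pos : 0 < D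
  AW_add : ∀ j q Ψ Φ, AW j q (Ψ + Φ) = AW j q Ψ + AW j q Φ
  AW_van : ∀ j q s Ψ, Van (s + D) Ψ → Van s (AW j q Ψ)
  AW_dl : ∀ j q ψ, Loc (q + D) ψ → (∀ i, opN (actW i) ψ = 0) →
    ∃ ψ', Loc q ψ' ∧ (∀ i, opN (actW i) ψ' = 0) ∧ AW j q (dl (q + D) ψ) = dl q ψ' ∧
      (q = 0 → ψ' = 0)
  AG_add : ∀ j q Ψ Φ, AG j q (Ψ + Φ) = AG j q Ψ + AG j q Φ
  AG_smul : ∀ j q (c : ZMod p) Ψ, AG j q (c • Ψ) = c • AG j q Ψ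
  AW_pb : ∀ j q Φ, Nrm (q + D) Φ → AW j q (pb hM Φ) = pb hM (AG j q Φ) ∧ Nrm q (AG j q Φ)
  AG_self : ∀ j q Θ, Loc (q + 1) Θ → InvG Θ →
    AG j q (cup q Θ (fun v => y (fun a => v a j))) = Θ
  AG_ne : ∀ i j q Θ, i ≠ j → Loc (q + D + 1) Θ →
    AG j (q + D) (cup (q + D) Θ (fun v => y (fun a => v a i))) =
      cup q (AG j q Θ) (fun v => y (fun a => v a i))
  AG_one : ∀ i j Θ, i ≠ j → Loc 1 Θ → AG j 0 (cup 0 Θ (fun v => y (fun a => v a i))) = 0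
  y_loc : Loc (D + 1) y
  y_nrm : Nrm D y
  y_inv : ∀ t v, y (fun i => v i + t) = y v
  y_dl : dl (D + 1) y = 0
  y_coh : ∀ (χ : Fin k → ZMod p) (l : (Fin M → Fin k → ZMod p) → ZMod p),
    (∀ j t u, l (actW j t u) = l u + t * χ j) →
    ∃ ψ, Loc D ψ ∧ InvW ψ ∧
      ∀ v, y (fun a => l (v a)) = (∑ j, χ j * y (fun a => v a ⟨0, hM⟩ j)) + dl D ψ v

end DT

namespace DT
open Finset

section Main
variable {p : ℕ} [Fact p.Prime] {k M : ℕ} {hM : 0 < M} {D : ℕ}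

/-- iterated cup product -/
def cupL {V : Type*} (D : ℕ) : List ((ℕ → V) → ZMod p) → (ℕ → V) → ZMod p
  | [] => fun _ => 1
  | φ :: φs => cup (D * φs.length) (cupL D φs) φ

def PW (S : StepData p k M hM D) : List (Fin k) → ((ℕ → Fin M → Fin k → ZMod p) → ZMod p) → ZMod p
  | [], Ψ => Ψ (fun _ _ _ => 0)
  | j :: js, Ψ => PW S js (S.AW j (D * js.length) Ψ)

def PG (S : StepData p k M hM D) : List (Fin k) → ((ℕ → Fin k → ZMod p) → ZMod p) → ZMod p
  | [], Ψ => Ψ (fun _ _ => 0)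
  | j :: js, Ψ => PG S js (S.AG j (D * js.length) Ψ)

theorem PW_add (S : StepData p k M hM D) (js : List (Fin k)) (Ψ Φ) :
    PW S js (Ψ + Φ) = PW S js Ψ + PW S js Φ := by
  induction js generalizing Ψ Φ with
  | nil => rfl
  | cons j js ih => simp only [PW, S.AW_add, ih]

theorem PG_add (S : StepData p k M hM D) (js : List (Fin k)) (Ψ Φ) :
    PG S js (Ψ + Φ) = PG S js Ψ + PG S js Φ := by
  induction js generalizing Ψ Φ with
  | nil => rfl
  | cons j js ih => simp only [PG, S.AG_add, ih]

theorem PG_smul (S : StepData p k M hM D) (js : List (Fin k)) (c : ZMod p) (Ψ) :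
    PG S js (c • Ψ) = c * PG S js Ψ := by
  induction js generalizing Ψ with
  | nil => rfl
  | cons j js ih => simp only [PG, S.AG_smul, ih]

theorem PW_van (S : StepData p k M hM D) (js : List (Fin k)) (Ψ) (h : Van (D * js.length) Ψ) :
    PW S js Ψ = 0 := by
  induction js generalizing Ψ with
  | nil =>
    apply h
    simp [Sm, diffs, cuts]
  | cons j js ih =>
    exact ih _ (S.AW_van _ _ _ _ (by simpa [mul_add] using h))

theorem PW_dl (S : StepData p k M hM D) (js : List (Fin k)) (ψ) (h : Loc (D * js.length) ψ)
    (hN : ∀ i, opN (actW i) ψ = 0) (h0 : D * js.length = 0 → ψ = 0) :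
    PW S js (dl (D * js.length) ψ) = 0 := by
  induction js generalizing ψ with
  | nil =>
    rw [h0 (by simp)]; simp [PW, dl]
  | cons j js ih =>
    obtain ⟨ψ', h1, h2, h3, h4⟩ := S.AW_dl j (D * js.length) ψ (by simpa [mul_add] using h) hN
    simp only [PW, List.length_cons, mul_add, mul_one]
    rw [h3]
    exact ih ψ' h1 h2 h4

theorem PW_pb (S : StepData p k M hM D) (js : List (Fin k)) (Φ) (h : Nrm (D * js.length) Φ) :
    PW S js (pb hM Φ) = PG S js Φ := by
  induction js generalizing Φ with
  | nil => rfl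
  | cons j js ih =>
    obtain ⟨h1, h2⟩ := S.AW_pb j (D * js.length) Φ (by simpa [mul_add] using h)
    simp only [PW, PG, h1]
    exact ih _ h2

theorem cupL_loc {V : Type*} (hD : 0 < D) (φs : List ((ℕ → V) → ZMod p))
    (h : ∀ φ ∈ φs, Loc (D + 1) φ) : Loc (D * φs.length + 1) (cupL D φs) := by
  induction φs with
  | nil => intro v v' _; rfl
  | cons φ φs ih =>
    have h1 := ih (fun φ hφ => h φ (List.mem_cons_of_mem _ hφ))
    have := loc_cup h1 (h φ List.mem_cons_self) (by omega)
    simpa [cupL, mul_add, add_assoc] using this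

theorem cupL_nrm {V : Type*} (φs : List ((ℕ → V) → ZMod p))
    (h : ∀ φ ∈ φs, Nrm D φ) : Nrm (D * φs.length) (cupL D φs) := by
  induction φs with
  | nil => intro v a ha; simp at ha
  | cons φ φs ih =>
    intro v a ha hv
    simp only [List.length_cons, mul_add, mul_one] at ha
    have h1 := ih (fun φ hφ => h φ (List.mem_cons_of_mem _ hφ))
    simp only [cupL, cup]
    by_cases hc : a < D * φs.length
    · rw [h1 v a hc hv, zero_mul]
    · rw [h φ List.mem_cons_self (sh _ v) (a - D * φs.length) (by omega), mul_zero]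
      simp only [sh]
      convert hv using 2 <;> omega

theorem cupL_dl {V : Type*} (hD : 0 < D) (φs : List ((ℕ → V) → ZMod p))
    (h : ∀ φ ∈ φs, Loc (D + 1) φ ∧ dl (D + 1) φ = 0) :
    dl (D * φs.length + 1) (cupL D φs) = 0 := by
  induction φs with
  | nil => funext v; simp [dl, cupL, sum_range_succ]
  | cons φ φs ih =>
    have h1 := ih (fun φ hφ => h φ (List.mem_cons_of_mem _ hφ))
    have h2 := cupL_loc hD φs (fun φ hφ => (h φ (List.mem_cons_of_mem _ hφ)).1)
    funext v
    have := dl_cup (D * φs.length) D (cupL D φs) φ h2 v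
    rw [h1, (h φ List.mem_cons_self).2] at this
    simpa [cupL, mul_add, cup] using this

theorem cupL_inv {V : Type*} (a : V → V) (φs : List ((ℕ → V) → ZMod p))
    (h : ∀ φ ∈ φs, ∀ v : ℕ → V, φ (fun i => a (v i)) = φ v) (v : ℕ → V) :
    cupL D φs (fun i => a (v i)) = cupL D φs v := by
  induction φs with
  | nil => rfl
  | cons φ φs ih =>
    have h1 := ih (fun φ hφ => h φ (List.mem_cons_of_mem _ hφ))
    simp only [cupL, cup, h1, sh_comp, h φ List.mem_cons_self]

/-- good cochains -/
def Good (D : ℕ) (φ : (ℕ → Fin M → Fin k → ZMod p) → ZMod p) : Prop :=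
  Loc (D + 1) φ ∧ InvW φ ∧ dl (D + 1) φ = 0

theorem repl (hD : 0 < D) (φs : List (((ℕ → Fin M → Fin k → ZMod p) → ZMod p) ×
      ((ℕ → Fin M → Fin k → ZMod p) → ZMod p)))
    (h : ∀ φ ∈ φs, Good D φ.1 ∧ Good D φ.2 ∧ ∃ ψ, Loc D ψ ∧ InvW ψ ∧ φ.1 = φ.2 + dl D ψ) :
    ∃ X, Loc (D * φs.length) X ∧ InvW X ∧
      cupL D (φs.map Prod.fst) = cupL D (φs.map Prod.snd) + dl (D * φs.length) X ∧
      (D * φs.length = 0 → X = 0) := by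
  induction φs with
  | nil => exact ⟨0, fun _ _ _ => rfl, fun _ _ _ => rfl, by simp [dl_zero], fun _ => rfl⟩
  | cons φ φs ih =>
    obtain ⟨X, hX1, hX2, hX3, hX4⟩ := ih (fun φ hφ => h φ (List.mem_cons_of_mem _ hφ))
    obtain ⟨g1, g2, ψ, hψ1, hψ2, hψ3⟩ := h φ List.mem_cons_self
    have hmem : ∀ φ' ∈ φs.map Prod.snd, Good D φ' := by
      intro φ' hφ'
      obtain ⟨x, hx, rfl⟩ := List.mem_map.1 hφ'
      exact (h x (List.mem_cons_of_mem _ hx)).2.1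
    have hΘl := cupL_loc hD (φs.map Prod.snd) (fun φ' hφ' => (hmem φ' hφ').1)
    have hΘd := cupL_dl hD (φs.map Prod.snd) (fun φ' hφ' => ⟨(hmem φ' hφ').1, (hmem φ' hφ').2.2⟩)
    have hΘi : InvW (cupL D (φs.map Prod.snd)) := fun j t v =>
      cupL_inv (actW j t) _ (fun φ' hφ' v => (hmem φ' hφ').2.1 j t v) v
    rw [List.length_map] at hΘl hΘd
    set Θ := cupL D (φs.map Prod.snd) with hΘ
    set a := D * φs.length with ha
    have hlen : D * (φ :: φs).length = a + D := by simp [mul_add, ha]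
    rw [hlen]
    obtain ⟨D', rfl⟩ : ∃ D', D = D' + 1 := ⟨D - 1, by omega⟩
    have f2 : dl (a + (D' + 1)) (cup a Θ ψ) = (-1 : ZMod p) ^ a • cup a Θ (dl (D' + 1) ψ) := by
      funext v
      have := dl_cup a D' Θ ψ hΘl v
      rw [hΘd] at this
      simpa [cup, add_assoc] using this
    have s : ((-1 : ZMod p) ^ a) * (-1) ^ a = 1 := by rw [← mul_pow]; simp
    have f1 : ∃ Y, Loc (a + (D' + 1)) Y ∧ InvW Y ∧
        dl (a + (D' + 1)) Y = cup a (dl a X) φ.1 := by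
      rcases Nat.eq_zero_or_pos a with h0 | h0
      · refine ⟨0, fun _ _ _ => rfl, fun _ _ _ => rfl, ?_⟩
        rw [hX4 h0, dl_zero, dl_zero]; funext v; simp [cup]
      · obtain ⟨a', ha'⟩ : ∃ a', a = a' + 1 := ⟨a - 1, by omega⟩
        rw [ha'] at hX1 ⊢
        refine ⟨cup a' X φ.1, ?_, ?_, ?_⟩
        · have := loc_cup hX1 g1.1 (by omega)
          convert this using 1; omega
        · intro j t v
          simp only [cup, sh_comp, hX2 j t, g1.2.1 j t]
        · funext v
          have := dl_cup a' (D' + 1) X φ.1 hX1 v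
          rw [g1.2.2] at this
          have e : a' + 1 + (D' + 1) = a' + (D' + 1) + 1 := by ring
          rw [e, this]
          simp [cup]
    obtain ⟨Y, hY1, hY2, hY3⟩ := f1
    refine ⟨Y + ((-1 : ZMod p) ^ a) • cup a Θ ψ, ?_, ?_, ?_, fun h => by omega⟩
    · intro v v' hv
      have := loc_cup hΘl hψ1 (by omega) v v' hv
      simp only [Pi.add_apply, Pi.smul_apply, this, hY1 v v' hv]
    · intro j t v
      simp only [Pi.add_apply, Pi.smul_apply, hY2 j t v, cup, sh_comp, hΘi j t, hψ2 j t]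
    · rw [dl_add, dl_smul, f2, hY3, smul_smul, s, one_smul]
      funext v
      simp only [List.map_cons, cupL, List.length_map, Pi.add_apply]
      rw [← ha, ← hΘ, hX3]
      simp only [cup, Pi.add_apply]
      have : φ.1 (sh a v) = φ.2 (sh a v) + dl (D' + 1) ψ (sh a v) := by
        conv_lhs => rw [hψ3]
        rfl
      rw [this]; ring

end Main
end DT

namespace DT
open Finset

section Main
variable {p : ℕ} [Fact p.Prime] {k M : ℕ} {hM : 0 < M} {D : ℕ}

def StepData.eta (S : StepData p k M hM D) (i : Fin k) : (ℕ → Fin k → ZMod p) → ZMod p :=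
  fun v => S.y (fun a => v a i)

theorem eta_loc (S : StepData p k M hM D) (i : Fin k) : Loc (D + 1) (S.eta i) :=
  fun _ _ hv => S.y_loc _ _ (fun j hj => by simp only [hv j hj])

theorem eta_nrm (S : StepData p k M hM D) (i : Fin k) : Nrm D (S.eta i) :=
  fun _ a ha hv => S.y_nrm _ a ha (by simp only [hv])

theorem eta_inv (S : StepData p k M hM D) (i : Fin k) : InvG (S.eta i) :=
  fun j t v => by
    simp only [StepData.eta, actG, Pi.add_apply]
    exact S.y_inv _ _

theorem AG_cupL (S : StepData p k M hM D) (j : Fin k) (l : ℕ) (w : List (Fin k))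
    (hw : w.length = l + 1) :
    S.AG j (D * l) (cupL D (w.map S.eta)) =
      if j ∈ w then cupL D ((w.erase j).map S.eta) else 0 := by
  induction w generalizing l with
  | nil => simp at hw
  | cons i w ih =>
    have hl : w.length = l := by simpa using hw
    have hloc : Loc (D * w.length + 1) (cupL D (w.map S.eta)) := by
      have := cupL_loc S.D_pos (w.map S.eta) (fun φ hφ => by
        obtain ⟨x, _, rfl⟩ := List.mem_map.1 hφ; exact eta_loc S x)
      simpa using this
    have hinv : InvG (cupL D (w.map S.eta)) := fun j t v =>
      cupL_inv _ _ (fun φ hφ v => by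
        obtain ⟨x, _, rfl⟩ := List.mem_map.1 hφ; exact eta_inv S x j t v) v
    simp only [List.map_cons, cupL, List.length_map]
    by_cases hij : i = j
    · subst hij
      simp only [List.mem_cons_self, if_true, List.erase_cons_head]
      rw [← hl]
      exact S.AG_self i _ _ hloc hinv
    · rw [List.erase_cons_tail (by simpa using hij)]
      have hmem : j ∈ i :: w ↔ j ∈ w := by simp [Ne.symm hij]
      simp only [hmem]
      cases l with
      | zero =>
        have : w = [] := List.eq_nil_of_length_eq_zero hl
        subst this
        have h0 := S.AG_one i j _ hij hloc
        rw [if_neg (by simp)]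
        exact h0
      | succ l =>
        rw [hl] at hloc ⊢
        have h2 := S.AG_ne i j (D * l) _ hij (by simpa [mul_add] using hloc)
        rw [ih l hl] at h2
        have e : D * (l + 1) = D * l + D := by ring
        rw [e]
        refine h2.trans ?_
        by_cases hj : j ∈ w
        · simp only [hj, if_true]
          have : (w.erase j).length = l := by rw [List.length_erase_of_mem hj, hl]; rfl
          simp only [List.map_cons, cupL, List.length_map, this]; rfl
        · simp only [hj, if_false]
          funext v; simp [cup]

theorem PG_cupL (S : StepData p k M hM D) (js w : List (Fin k)) (h : js.length = w.length) :
    PG S js (cupL D (w.map S.eta)) = if js.Perm w then 1 else 0 := by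
  induction js generalizing w with
  | nil =>
    have : w = [] := List.eq_nil_of_length_eq_zero h.symm
    subst this; simp [PG, cupL]
  | cons j js ih =>
    simp only [PG]
    rw [AG_cupL S j _ w (by simpa using h.symm)]
    simp only [List.cons_perm_iff_perm_erase]
    by_cases hj : j ∈ w
    · simp only [hj, if_true, true_and]
      exact ih _ (by rw [List.length_erase_of_mem hj, ← h]; simp)
    · simp only [hj, if_false, false_and]
      have := PG_smul S js 0 0
      simpa using this

def StepData.lin (S : StepData p k M hM D) (χ : Fin k → ZMod p) : (ℕ → Fin k → ZMod p) → ZMod p :=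
  fun v => ∑ j, χ j * S.eta j v

noncomputable def linP (χ : Fin k → ZMod p) : MvPolynomial (Fin k) (ZMod p) :=
  ∑ j, MvPolynomial.C (χ j) * MvPolynomial.X j

theorem cupL_span (S : StepData p k M hM D) (χs : List (Fin k → ZMod p)) :
    ((cupL D (χs.map S.lin), (χs.map linP).prod) :
      ((ℕ → Fin k → ZMod p) → ZMod p) × MvPolynomial (Fin k) (ZMod p)) ∈
    Submodule.span (ZMod p) {x | ∃ w : List (Fin k), w.length = χs.length ∧
      x = (cupL D (w.map S.eta), (w.map MvPolynomial.X).prod)} := by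
  induction χs with
  | nil => exact Submodule.subset_span ⟨[], rfl, rfl⟩
  | cons χ χs ih =>
    have key : ∀ x ∈ Submodule.span (ZMod p) {x | ∃ w : List (Fin k), w.length = χs.length ∧
      x = (cupL D (w.map S.eta), (w.map (MvPolynomial.X (R := ZMod p))).prod)},
      ((cup (D * χs.length) x.1 (S.lin χ), linP χ * x.2) :
      ((ℕ → Fin k → ZMod p) → ZMod p) × MvPolynomial (Fin k) (ZMod p)) ∈
      Submodule.span (ZMod p) {x | ∃ w : List (Fin k), w.length = (χ :: χs).length ∧
      x = (cupL D (w.map S.eta), (w.map MvPolynomial.X).prod)} := by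
      intro x hx
      induction hx using Submodule.span_induction with
      | mem x hx =>
        obtain ⟨w, hw, rfl⟩ := hx
        have : ((cup (D * χs.length) (cupL D (w.map S.eta)) (S.lin χ),
            linP χ * (w.map MvPolynomial.X).prod) :
            ((ℕ → Fin k → ZMod p) → ZMod p) × MvPolynomial (Fin k) (ZMod p)) =
            ∑ j, χ j • (cupL D ((j :: w).map S.eta), ((j :: w).map MvPolynomial.X).prod) := by
          apply Prod.ext
          · rw [Prod.fst_sum]
            funext v
            simp only [cup, StepData.lin, mul_sum, Prod.smul_mk, Finset.sum_apply, Pi.smul_apply,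
              List.map_cons, cupL, List.length_map, hw, smul_eq_mul]
            apply sum_congr rfl; intros; ring
          · rw [Prod.snd_sum]
            simp only [linP, sum_mul, Prod.smul_mk, List.map_cons, List.prod_cons,
              MvPolynomial.smul_eq_C_mul, mul_assoc]
        rw [this]
        exact Submodule.sum_mem _ (fun j _ => Submodule.smul_mem _ _
          (Submodule.subset_span ⟨j :: w, by simp [hw], rfl⟩))
      | zero =>
        convert Submodule.zero_mem _ using 1
        refine Prod.ext ?_ (by simp)
        funext v; simp [cup]
      | add x y _ _ hx hy =>
        convert Submodule.add_mem _ hx hy using 1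
        refine Prod.ext ?_ (by simp [mul_add])
        funext v; simp [cup, add_mul]
      | smul c x _ hx =>
        convert Submodule.smul_mem _ c hx using 1
        refine Prod.ext ?_ (by simp)
        funext v; simp [cup, mul_assoc]
    have := key _ ih
    simpa [cupL] using this

theorem prodX (w : List (Fin k)) : (w.map (MvPolynomial.X (R := ZMod p))).prod =
    MvPolynomial.monomial (Multiset.toFinsupp (w : Multiset (Fin k))) 1 := by
  induction w with
  | nil => simp
  | cons j w ih =>
    rw [List.map_cons, List.prod_cons, ih, MvPolynomial.X, MvPolynomial.monomial_mul, one_mul,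
      ← Multiset.cons_coe, ← Multiset.singleton_add, map_add, Multiset.toFinsupp_singleton]

theorem PG_lin (S : StepData p k M hM D) (χs : List (Fin k → ZMod p)) (js : List (Fin k))
    (h : js.length = χs.length) :
    PG S js (cupL D (χs.map S.lin)) =
      MvPolynomial.coeff (Multiset.toFinsupp (js : Multiset (Fin k))) (χs.map linP).prod := by
  have := cupL_span S χs
  revert this
  generalize (χs.map linP).prod = P
  generalize cupL D (χs.map S.lin) = Q
  intro hx
  suffices H : ∀ x : ((ℕ → Fin k → ZMod p) → ZMod p) × MvPolynomial (Fin k) (ZMod p),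
      x ∈ Submodule.span (ZMod p) {x | ∃ w : List (Fin k), w.length = χs.length ∧
      x = (cupL D (w.map S.eta), (w.map (MvPolynomial.X (R := ZMod p))).prod)} →
      PG S js x.1 = MvPolynomial.coeff (Multiset.toFinsupp (js : Multiset (Fin k))) x.2 from
    H _ hx
  clear hx
  intro x hx
  induction hx using Submodule.span_induction with
  | mem x hx =>
    obtain ⟨w, hw, rfl⟩ := hx
    simp only
    rw [PG_cupL S js w (by omega), prodX, MvPolynomial.coeff_monomial]
    congr 1
    rw [EmbeddingLike.apply_eq_iff_eq, Multiset.coe_eq_coe]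
    exact propext ⟨List.Perm.symm, List.Perm.symm⟩
  | zero => simpa using PG_smul S js 0 0
  | add x y _ _ hx hy => simp [PG_add, hx, hy]
  | smul c x _ hx => simp [PG_smul, hx]

theorem exists_js (χs : List (Fin k → ZMod p)) (h : ∀ χ ∈ χs, χ ≠ 0) :
    ∃ js : List (Fin k), js.length = χs.length ∧
      MvPolynomial.coeff (Multiset.toFinsupp (js : Multiset (Fin k))) (χs.map linP).prod ≠ 0 := by
  have hne : (χs.map linP).prod ≠ 0 := by
    rw [Ne, List.prod_eq_zero_iff]
    intro hmem
    obtain ⟨χ, hχ, h0⟩ := List.mem_map.1 hmem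
    apply h χ hχ
    funext j
    have := congrArg (MvPolynomial.coeff (Finsupp.single j 1)) h0
    simpa [linP, MvPolynomial.coeff_sum, MvPolynomial.coeff_C_mul, MvPolynomial.coeff_X, Finsupp.single_left_inj] using this
  have hhom : (χs.map linP).prod.IsHomogeneous χs.length := by
    clear h hne
    induction χs with
    | nil => exact MvPolynomial.isHomogeneous_one _ _
    | cons χ χs ih =>
      rw [List.map_cons, List.prod_cons, List.length_cons, add_comm]
      refine MvPolynomial.IsHomogeneous.mul ?_ ih
      refine MvPolynomial.IsHomogeneous.sum _ _ _ (fun j _ => ?_)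
      exact MvPolynomial.isHomogeneous_C_mul_X _ _
  obtain ⟨m, hm⟩ := MvPolynomial.ne_zero_iff.1 hne
  have hdeg := hhom hm
  refine ⟨(Finsupp.toMultiset m).toList, ?_, ?_⟩
  · rw [Multiset.length_toList, Finsupp.card_toMultiset]
    rw [← hdeg, Finsupp.weight_apply]; simp [Finsupp.sum]
  · rw [Multiset.coe_toList, Finsupp.toMultiset_toFinsupp]; exact hm

theorem combinatorial (S : StepData p k M hM D)
    (ls : List ((Fin k → ZMod p) × ((Fin M → Fin k → ZMod p) → ZMod p)))
    (h : ∀ x ∈ ls, x.1 ≠ 0 ∧ ∀ j t u, x.2 (actW j t u) = x.2 u + t * x.1 j) :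
    ∃ v : ℕ → Fin M → Fin k → ZMod p, Sm (D * ls.length) v ∧
      ∀ x ∈ ls, ∃ s, S.y (fun a => x.2 (v (s + a))) ≠ 0 := by
  obtain ⟨js, hjs, hc⟩ := exists_js (ls.map Prod.fst) (by
    intro χ hχ
    obtain ⟨x, hx, rfl⟩ := List.mem_map.1 hχ
    exact (h x hx).1)
  rw [← PG_lin S _ js hjs] at hc
  have hlin_nrm : ∀ χ, Nrm D (S.lin χ) := fun χ v a ha hv =>
    sum_eq_zero (fun j _ => by rw [eta_nrm S j v a ha hv, mul_zero])
  rw [List.length_map] at hjs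
  rw [← PW_pb S js _ (by
    have := cupL_nrm (D := D) ((ls.map Prod.fst).map S.lin) (fun φ hφ => by
      obtain ⟨χ, _, rfl⟩ := List.mem_map.1 hφ; exact hlin_nrm χ)
    simpa [hjs] using this)] at hc
  let prs : List (((ℕ → Fin M → Fin k → ZMod p) → ZMod p) ×
      ((ℕ → Fin M → Fin k → ZMod p) → ZMod p)) :=
    ls.map (fun x => (fun v => S.y (fun a => x.2 (v a)), pb hM (S.lin x.1)))
  have hpr2 : cupL D (prs.map Prod.snd) = pb hM (cupL D ((ls.map Prod.fst).map S.lin)) := by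
    simp only [prs, List.map_map]
    clear h hjs hc prs
    induction ls with
    | nil => rfl
    | cons x ls ih =>
      simp only [List.map_cons, cupL, ih, List.length_map]
      rfl
  obtain ⟨X, hX1, hX2, hX3, hX4⟩ := repl S.D_pos prs (by
    intro φ hφ
    obtain ⟨x, hx, rfl⟩ := List.mem_map.1 hφ
    refine ⟨⟨?_, ?_, ?_⟩, ⟨?_, ?_, ?_⟩, ?_⟩
    · exact fun _ _ hv => S.y_loc _ _ (fun j hj => by simp only [hv j hj])
    · intro j t v
      simp only [(h x hx).2]
      exact S.y_inv _ _
    · funext v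
      have := dl_comp x.2 (D + 1) S.y v
      rw [S.y_dl] at this
      exact this
    · intro v v' hv
      simp only [pb, StepData.lin]
      exact sum_congr rfl (fun j _ => congrArg _ (eta_loc S j _ _ (fun i hi => by rw [hv i hi])))
    · intro j t v
      simp only [pb, StepData.lin]
      exact sum_congr rfl (fun i _ => congrArg _ (eta_inv S i j t (fun i => v i ⟨0, hM⟩)))
    · have e : pb hM (S.lin x.1) = ∑ j, x.1 j • (fun v : ℕ → Fin M → Fin k → ZMod p =>
          S.y (fun a => v a ⟨0, hM⟩ j)) := by
        funext v
        simp [pb, StepData.lin, StepData.eta, Finset.sum_apply]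
      have e2 : ∀ j, dl (D + 1) (fun v : ℕ → Fin M → Fin k → ZMod p =>
          S.y (fun a => v a ⟨0, hM⟩ j)) = 0 := by
        intro j
        funext v
        have := dl_comp (fun u : Fin M → Fin k → ZMod p => u ⟨0, hM⟩ j) (D + 1) S.y v
        rw [S.y_dl] at this
        exact this
      simp only [e]
      have : ∀ s : Finset (Fin k), dl (D + 1) (∑ j ∈ s, x.1 j • (fun v : ℕ → Fin M → Fin k → ZMod p =>
          S.y (fun a => v a ⟨0, hM⟩ j))) = 0 := by
        intro s
        induction s using Finset.induction_on with
        | empty => simp [dl_zero]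
        | insert j s hj ih => rw [sum_insert hj, dl_add, ih, dl_smul, e2]; simp
      exact this _
    · obtain ⟨ψ, h1, h2, h3⟩ := S.y_coh x.1 x.2 (h x hx).2
      exact ⟨ψ, h1, h2, funext h3⟩)
  have hlen : prs.length = js.length := by simp [prs, hjs]
  rw [hlen] at hX1 hX3 hX4
  have hP : PW S js (cupL D (prs.map Prod.fst)) ≠ 0 := by
    rw [hX3, PW_add, PW_dl S js X hX1 (fun i => opN_inv _ _ (hX2 i)) hX4, hpr2, add_zero]
    exact hc
  have hnv : ¬ Van (D * js.length) (cupL D (prs.map Prod.fst)) := fun hv => hP (PW_van S js _ hv)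
  unfold Van at hnv
  push Not at hnv
  obtain ⟨v, hv, hne⟩ := hnv
  refine ⟨v, by rwa [← hjs], ?_⟩
  have hfin : ∀ φs : List ((ℕ → Fin M → Fin k → ZMod p) → ZMod p), cupL D φs v ≠ 0 →
      ∀ φ ∈ φs, ∃ s, φ (sh s v) ≠ 0 := by
    intro φs
    induction φs with
    | nil => intro _ φ hφ; simp at hφ
    | cons φ φs ih =>
      intro hne φ' hφ'
      simp only [cupL, cup] at hne
      rcases List.mem_cons.1 hφ' with rfl | hφ'
      · exact ⟨_, right_ne_zero_of_mul hne⟩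
      · exact ih (left_ne_zero_of_mul hne) φ' hφ'
  intro x hx
  exact hfin _ hne (fun v => S.y (fun a => x.2 (v a)))
    (by simp only [prs, List.map_map, List.mem_map]; exact ⟨x, hx, rfl⟩)

end Main
end DT

namespace DT
open Finset

section Gen
variable {p : ℕ} [Fact p.Prime] {k M : ℕ}

theorem opN_zero' {V : Type*} (a : ZMod p → V → V) : opN a (0 : (ℕ → V) → ZMod p) = 0 := by
  funext v; simp [opN]

theorem opD_zero' {V : Type*} (a : ZMod p → V → V) : opD a (0 : (ℕ → V) → ZMod p) = 0 := by
  funext v; simp [opD]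

theorem BW_zero' (j : Fin k) (q : ℕ) : BW j q (0 : (ℕ → Fin M → Fin k → ZMod p) → ZMod p) = 0 := by
  funext v; simp [BW, Pr]

theorem BG_zero' (j : Fin k) (q : ℕ) : BG j q (0 : (ℕ → Fin k → ZMod p) → ZMod p) = 0 := by
  funext v; simp [BG, Pr]

theorem cup_zero_right {V : Type*} (q : ℕ) (Θ : (ℕ → V) → ZMod p) : cup q Θ (fun _ => 0) = 0 := by
  funext v; simp [cup]

theorem cup_zero_left {V : Type*} (q : ℕ) (Θ : (ℕ → V) → ZMod p) : cup q 0 Θ = 0 := by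
  funext v; simp [cup]

theorem cG_self (j : Fin k) (g : Fin k → ZMod p) : cG j g j = 0 := by simp [cG]
theorem cG_ne {i j : Fin k} (h : i ≠ j) (g : Fin k → ZMod p) : cG j g i = g i := by simp [cG, h]
theorem actG_self (j : Fin k) (t : ZMod p) (g : Fin k → ZMod p) : actG j t g j = g j + t := by
  simp [actG]
theorem actG_ne {i j : Fin k} (h : i ≠ j) (t : ZMod p) (g : Fin k → ZMod p) :
    actG j t g i = g i := by simp [actG, h]

/-- normalized functions of an untouched coordinate die under `BG` -/
theorem BG_ne {i j : Fin k} (h : i ≠ j) (b : ℕ) (y : (ℕ → ZMod p) → ZMod p) (hy : Nrm b y) :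
    BG j b (fun v => y (fun a => v a i)) = 0 := by
  funext v
  unfold BG Pr
  refine sum_eq_zero (fun l hl => ?_)
  have hl := mem_range.1 hl
  have : (fun v : ℕ → Fin k → ZMod p => y fun a => v a i) (spl id (cG j) l v) = 0 :=
    hy _ l hl (by simp [spl, cG_ne h])
  rw [this, mul_zero]

/-- the invariant part of a label -/
theorem eta_label_inv (χ : Fin k → ZMod p) (l : (Fin M → Fin k → ZMod p) → ZMod p) (hM : 0 < M)
    (h : ∀ j t u, l (actW j t u) = l u + t * χ j) (j : Fin k) (t : ZMod p)
    (u : Fin M → Fin k → ZMod p) :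
    l (actW j t u) - ∑ i, χ i * (actW j t u) ⟨0, hM⟩ i = l u - ∑ i, χ i * u ⟨0, hM⟩ i := by
  rw [h]
  have : ∑ i, χ i * (actW j t u) ⟨0, hM⟩ i = (∑ i, χ i * u ⟨0, hM⟩ i) + t * χ j := by
    simp only [actW, actG, Pi.add_apply, mul_add, sum_add_distrib]
    congr 1
    rw [Finset.sum_eq_single j]
    · simp [mul_comm]
    · intro b _ hb; simp [hb]
    · simp
  rw [this]; ring

theorem AW_dl_aux (j : Fin k) (q : ℕ) (ψ : (ℕ → Fin M → Fin k → ZMod p) → ZMod p)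
    (hψ : Loc (q + 1) ψ) (hN : opN (actW j) ψ = 0) :
    opN (actW j) (BW j (q + 1) (dl (q + 1) ψ)) =
      dl q ((-1 : ZMod p) • opN (actW j) (BW j q ψ)) := by
  rw [BW_dl j q ψ hψ, opN_add, opN_add, opN_smul, opN_smul, opN_H0, hN, dl_smul, dl_opN]
  simp

theorem opN_step {i j : Fin k} (q : ℕ) (ψ : (ℕ → Fin M → Fin k → ZMod p) → ZMod p)
    (hN : ∀ i, opN (actW i) ψ = 0) :
    opN (actW i) (opN (actW j) (BW j q ψ)) = 0 := by
  by_cases hij : i = j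
  · subst hij
    exact opN_opN _ (actW_actW i) _
  · rw [opN_comm _ _ (actW_comm i j), opN_BW_comm hij, hN, BW_zero', opN_zero']

end Gen

theorem dl_two {p : ℕ} [Fact p.Prime] : dl 2 (fun v : ℕ → ZMod p => v 1 - v 0) = 0 := by
  funext v; simp [dl, sum_range_succ, face]

theorem dl_one {p : ℕ} [Fact p.Prime] {V : Type*} (f : V → ZMod p) (v : ℕ → V) :
    dl 1 (fun v => f (v 0)) v = f (v 1) - f (v 0) := by
  simp [dl, sum_range_succ, face]; ring

section Two

variable (k M : ℕ) (hM : 0 < M)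

instance fact2 : Fact (Nat.Prime 2) := ⟨Nat.prime_two⟩

def step2 : StepData 2 k M hM 1 where
  AW j q Ψ := opN (actW j) (BW j (q + 1) Ψ)
  AG j q Ψ := opN (actG j) (BG j (q + 1) Ψ)
  y v := v 1 - v 0
  D_pos := by norm_num
  AW_add j q Ψ Φ := by rw [BW_add, opN_add]
  AW_van j q s Ψ h := van_opN j (van_BW j _ h)
  AW_dl j q ψ h hN := by
    refine ⟨(-1 : ZMod 2) • opN (actW j) (BW j q ψ), ?_, ?_, AW_dl_aux j q ψ h (hN j), ?_⟩
    · intro v v' hv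
      have := loc_opN (actW j) (loc_BW j q h) v v' hv
      simp only [Pi.smul_apply, this]
    · intro i
      rw [opN_smul, opN_step q ψ hN, smul_zero]
    · rintro rfl
      rw [BW_zero, opN_zero', smul_zero]
  AG_add j q Ψ Φ := by rw [BG_add, opN_add]
  AG_smul j q c Φ := by rw [BG_smul, opN_smul]
  AW_pb j q Φ h := by
    rw [BW_pb hM j q h, opN_pb]
    exact ⟨rfl, nrm_opN j (nrm_BG j q h)⟩
  AG_self j q Θ h hi := by
    rw [BG_cup j q 1 h]
    have e1 : (fun v : ℕ → Fin k → ZMod 2 => cG j (v 1) j - cG j (v 0) j) = fun _ => 0 := by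
      funext v; simp [cG_self]
    simp only [e1, cup_zero_right, zero_add]
    rw [opN_smul, opN_cup_left j q hi]
    funext v
    have : opN (actG j) (BG j 1 fun v => v 1 j - v 0 j) (sh q v) = 1 := by
      simp only [opN, BG, Pr, spl]
      have h1 : ∑ x : ZMod 2, x = 1 := by decide
      have h2 : (2 : ZMod 2) = 0 := by decide
      simp [cG_self, actG_self, sum_add_distrib, h1, h2]
    have s : (-1 : ZMod 2) ^ q = 1 := by
      have : (-1 : ZMod 2) = 1 := by decide
      rw [this, one_pow]
    simp only [Pi.smul_apply, cup, this, s]; simp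
  AG_ne i j q Θ hij h := by
    rw [BG_cup j (q + 1) 1 h, BG_ne hij 1 (fun v => v 1 - v 0) (by
      intro v a ha hv
      have : a = 0 := by omega
      subst this; simp at hv; simp [hv])]
    simp only [cG_ne hij]
    have : cup (q + 1) Θ (0 : (ℕ → Fin k → ZMod 2) → ZMod 2) = 0 := cup_zero_right _ _
    rw [this, smul_zero, add_zero, opN_cup_right]
    · rfl
    · intro t v; simp only [actG_ne hij]
  AG_one i j Θ hij h := by
    have := BG_cup j 0 1 (η := fun v => v 1 i - v 0 i) h
    rw [BG_ne hij 1 (fun v => v 1 - v 0) (by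
      intro v a ha hv
      have : a = 0 := by omega
      subst this; simp at hv; simp [hv]), BG_zero, cup_zero_left] at this
    have h2 : cup 0 Θ (0 : (ℕ → Fin k → ZMod 2) → ZMod 2) = 0 := cup_zero_right _ _
    rw [h2, smul_zero, add_zero] at this
    rw [this, opN_zero']
  y_loc v v' hv := by simp only [hv 0 (by omega), hv 1 (by omega)]
  y_nrm v a ha hv := by
    have : a = 0 := by omega
    subst this; simp at hv; simp [hv]
  y_inv t v := by ring
  y_dl := dl_two
  y_coh χ l h := by
    refine ⟨fun v => l (v 0) - ∑ i, χ i * (v 0) ⟨0, hM⟩ i, ?_, ?_, ?_⟩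
    · intro v v' hv; simp only [hv 0 (by omega)]
    · intro j t v; exact eta_label_inv χ l hM h j t (v 0)
    · intro v
      rw [dl_one (fun u => l u - ∑ i, χ i * u ⟨0, hM⟩ i) v]
      simp only [mul_sub, sum_sub_distrib]
      ring

end Two

section Odd
variable {p : ℕ} [Fact p.Prime]

def ry (a b c : ZMod p) : ℤ :=
  ((b - a).valMinAbs + (c - b).valMinAbs - (c - a).valMinAbs) / p

theorem dvd_of_cast {z : ℤ} (h : (z : ZMod p) = 0) : (p : ℤ) ∣ z :=
  (ZMod.intCast_zmod_eq_zero_iff_dvd z p).1 h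

theorem p_mul_ry (a b c : ZMod p) :
    (p : ℤ) * ry a b c = (b - a).valMinAbs + (c - b).valMinAbs - (c - a).valMinAbs := by
  apply Int.mul_ediv_cancel'
  apply dvd_of_cast
  push_cast
  ring

theorem p_ne : (p : ℤ) ≠ 0 := by
  exact_mod_cast (Fact.out : p.Prime).ne_zero

theorem ry_self_left (a c : ZMod p) : ry a a c = 0 := by
  simp [ry]

theorem ry_self_right (a c : ZMod p) : ry a c c = 0 := by
  simp [ry]

theorem ry_cocycle (a b c d : ZMod p) : ry b c d - ry a c d + ry a b d - ry a b c = 0 := by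
  apply mul_left_cancel₀ (p_ne (p := p))
  rw [mul_zero, mul_sub, mul_add, mul_sub]
  simp only [p_mul_ry]; ring

theorem sum_ry (a b : ZMod p) : ∑ t : ZMod p, ry (a + t) (b + t) 0 = (b - a).valMinAbs := by
  apply mul_left_cancel₀ (p_ne (p := p))
  rw [mul_sum]
  simp only [p_mul_ry, sum_add_distrib, sum_sub_distrib]
  have h : ∀ x : ZMod p, ∑ t : ZMod p, (0 - (x + t)).valMinAbs = ∑ t : ZMod p, t.valMinAbs := by
    intro x
    refine Fintype.sum_equiv (Equiv.subLeft (-x)) _ _ (fun t => ?_)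
    simp only [Equiv.subLeft_apply]
    congr 1; ring
  rw [h, h]
  simp [ZMod.card]

def yOdd (v : ℕ → ZMod p) : ZMod p := (ry (v 0) (v 1) (v 2) : ZMod p)

theorem yOdd_nrm : Nrm 2 (yOdd (p := p)) := by
  intro v a ha hv
  unfold yOdd
  interval_cases a
  · simp only [zero_add] at hv; rw [hv, ry_self_left]; simp
  · norm_num at hv; rw [hv, ry_self_right]; simp

variable (k M : ℕ) (hM : 0 < M)

theorem yOdd_coh (χ : Fin k → ZMod p) (l : (Fin M → Fin k → ZMod p) → ZMod p)
    (h : ∀ j t u, l (actW j t u) = l u + t * χ j) :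
    ∃ ψ : (ℕ → Fin M → Fin k → ZMod p) → ZMod p, Loc 2 ψ ∧ InvW ψ ∧
      ∀ v, yOdd (fun a => l (v a)) = (∑ j, χ j * yOdd (fun a => v a ⟨0, hM⟩ j)) + dl 2 ψ v := by
  let e : (Fin M → Fin k → ZMod p) → ZMod p := fun u => l u - ∑ i, χ i * u ⟨0, hM⟩ i
  have he : ∀ j t u, e (actW j t u) = e u := eta_label_inv χ l hM h
  let ρ : (Fin M → Fin k → ZMod p) → (Fin M → Fin k → ZMod p) → ℤ := fun u w =>
    (l w - l u).valMinAbs - (∑ j, (χ j).valMinAbs * (w ⟨0, hM⟩ j - u ⟨0, hM⟩ j).valMinAbs)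
      - (e w).valMinAbs + (e u).valMinAbs
  have hρ : ∀ u w, (p : ℤ) * (ρ u w / p) = ρ u w := by
    intro u w
    apply Int.mul_ediv_cancel'
    apply dvd_of_cast
    simp only [ρ, e]
    push_cast
    simp only [ZMod.coe_valMinAbs, mul_sub, sum_sub_distrib]
    ring
  refine ⟨fun v => ((ρ (v 0) (v 1) / p : ℤ) : ZMod p), ?_, ?_, ?_⟩
  · intro v v' hv; simp only [hv 0 (by omega), hv 1 (by omega)]
  · intro j t v
    simp only
    congr 2
    simp only [ρ, he]
    have : ∀ i, actW j t (v 1) ⟨0, hM⟩ i - actW j t (v 0) ⟨0, hM⟩ i =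
        v 1 ⟨0, hM⟩ i - v 0 ⟨0, hM⟩ i := by
      intro i; simp [actW, actG]
    simp only [this, h, add_sub_add_right_eq_sub]
  · intro v
    have key : ry (l (v 0)) (l (v 1)) (l (v 2)) =
        (∑ j, (χ j).valMinAbs * ry (v 0 ⟨0, hM⟩ j) (v 1 ⟨0, hM⟩ j) (v 2 ⟨0, hM⟩ j)) +
          (ρ (v 1) (v 2) / p - ρ (v 0) (v 2) / p + ρ (v 0) (v 1) / p) := by
      apply mul_left_cancel₀ (p_ne (p := p))
      rw [mul_add, mul_add, mul_sub, hρ, hρ, hρ, p_mul_ry, mul_sum]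
      have : ∀ j, (p : ℤ) * ((χ j).valMinAbs * ry (v 0 ⟨0, hM⟩ j) (v 1 ⟨0, hM⟩ j) (v 2 ⟨0, hM⟩ j)) =
          (χ j).valMinAbs * (v 1 ⟨0, hM⟩ j - v 0 ⟨0, hM⟩ j).valMinAbs +
          (χ j).valMinAbs * (v 2 ⟨0, hM⟩ j - v 1 ⟨0, hM⟩ j).valMinAbs -
          (χ j).valMinAbs * (v 2 ⟨0, hM⟩ j - v 0 ⟨0, hM⟩ j).valMinAbs := by
        intro j; rw [mul_left_comm, p_mul_ry]; ring
      simp only [this, sum_add_distrib, sum_sub_distrib, ρ]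
      ring
    have := congrArg (Int.cast : ℤ → ZMod p) key
    simp only [yOdd]
    rw [this]
    push_cast
    congr 1
    simp [dl, sum_range_succ, face]
    ring

def stepOdd : StepData p k M hM 2 where
  AW j q Ψ := opD (actW j) (BW j (q + 1) (opN (actW j) (BW j (q + 2) Ψ)))
  AG j q Ψ := opD (actG j) (BG j (q + 1) (opN (actG j) (BG j (q + 2) Ψ)))
  y := yOdd
  D_pos := by norm_num
  AW_add j q Ψ Φ := by rw [BW_add, opN_add, BW_add, opD_add]
  AW_van j q s Ψ h := van_opD j (van_BW j _ (van_opN j (van_BW j _ h)))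
  AW_dl j q ψ h hN := by
    have h1 := AW_dl_aux j (q + 1) ψ h (hN j)
    obtain ⟨χ, hχ⟩ : ∃ χ, χ = (-1 : ZMod p) • opN (actW j) (BW j (q + 1) ψ) := ⟨_, rfl⟩
    rw [← hχ] at h1
    have hl : Loc (q + 1) χ := by
      intro v v' hv
      have := loc_opN (actW j) (loc_BW j (q + 1) h) v v' hv
      simp only [hχ, Pi.smul_apply, this]
    have hχN : ∀ i, opN (actW i) χ = 0 := fun i => by
      rw [hχ, opN_smul, opN_step (q + 1) ψ hN, smul_zero]
    refine ⟨(-1 : ZMod p) • opD (actW j) (BW j q χ), ?_, ?_, ?_, ?_⟩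
    · intro v v' hv
      have := loc_opD (actW j) (loc_BW j q hl) v v' hv
      simp only [Pi.smul_apply, this]
    · intro i
      rw [opN_smul]
      by_cases hij : i = j
      · subst hij
        rw [opN_opD _ (actW_actW i), smul_zero]
      · rw [opN_opD_comm _ _ (actW_comm i j), opN_BW_comm hij, hχN, BW_zero', opD_zero', smul_zero]
    · rw [h1, BW_dl j q χ hl, opD_add, opD_add, opD_smul, opD_smul, opD_H0, dl_smul, dl_opD]
      have : opD (actW j) χ = 0 := by
        rw [hχ, opD_smul, opD_opN _ (actW_actW j), smul_zero]
      rw [this]; simp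
    · rintro rfl
      rw [BW_zero, opD_zero', smul_zero]
  AG_add j q Ψ Φ := by rw [BG_add, opN_add, BG_add, opD_add]
  AG_smul j q c Φ := by rw [BG_smul, opN_smul, BG_smul, opD_smul]
  AW_pb j q Φ h := by
    have h1 : Nrm (q + 1) (opN (actG j) (BG j (q + 2) Φ)) := nrm_opN j (nrm_BG j (q + 1) h)
    rw [BW_pb hM j (q + 1) h, opN_pb, BW_pb hM j q h1, opD_pb]
    exact ⟨rfl, nrm_opD j (nrm_BG j q h1)⟩
  AG_self j q Θ h hi := by
    rw [BG_cup j q 2 h]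
    have e1 : (fun v : ℕ → Fin k → ZMod p => yOdd (fun a => cG j (v a) j)) = fun _ => 0 := by
      funext v; simp [cG_self, yOdd, ry]
    simp only [e1, cup_zero_right, zero_add]
    rw [opN_smul, opN_cup_left j q hi, BG_smul]
    have e2 : opN (actG j) (BG j 2 fun v : ℕ → Fin k → ZMod p => yOdd fun a => v a j) =
        fun v => v 0 j - v 1 j := by
      funext v
      have h1 : ∀ t : ZMod p, (BG j 2 fun v : ℕ → Fin k → ZMod p => yOdd fun a => v a j)
          (fun i => actG j t (v i)) =
          - ((ry (v 0 j + t) (v 1 j + t) 0 : ℤ) : ZMod p) := by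
        intro t
        simp [BG, Pr, spl, sum_range_succ, cG_self, actG_self, yOdd, ry_self_right]
      simp only [opN, h1]
      rw [sum_neg_distrib, ← Int.cast_sum, sum_ry, ZMod.coe_valMinAbs]; ring
    rw [e2, BG_cup j q 1 h]
    have e3 : (fun v : ℕ → Fin k → ZMod p => cG j (v 0) j - cG j (v 1) j) = fun _ => 0 := by
      funext v; simp [cG_self]
    simp only [e3, cup_zero_right, zero_add]
    have s : ((-1 : ZMod p) ^ q) * (-1) ^ q = 1 := by rw [← mul_pow]; simp
    rw [smul_smul, s, one_smul, opD_cup_left j q hi]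
    funext v
    simp [cup, opD, BG, Pr, spl, cG_self, actG_self]
  AG_ne i j q Θ hij h := by
    have z : ∀ q (Θ : (ℕ → Fin k → ZMod p) → ZMod p),
      cup q Θ (0 : (ℕ → Fin k → ZMod p) → ZMod p) = 0 := cup_zero_right
    rw [BG_cup j (q + 2) 2 h, BG_ne hij 2 yOdd yOdd_nrm]
    simp only [cG_ne hij]
    rw [z, smul_zero, add_zero, opN_cup_right _ _ (fun t v => by simp only [actG_ne hij])]
    have hl : Loc (q + 1 + 1) (opN (actG j) (BG j (q + 2) Θ)) := loc_opN _ (loc_BG j _ h)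
    have := BG_cup j (q + 1) 2 (η := fun v => yOdd fun a => v a i) hl
    rw [BG_ne hij 2 yOdd yOdd_nrm] at this
    simp only [cG_ne hij] at this
    rw [z, smul_zero, add_zero] at this
    have e : q + 2 + 1 = q + 1 + 2 := by ring
    have e' : q + 2 - 1 = q + 1 := by omega
    rw [e, e', this, opD_cup_right _ _ (fun t v => by simp only [actG_ne hij])]
    rfl
  AG_one i j Θ hij h := by
    have z : ∀ q (Θ : (ℕ → Fin k → ZMod p) → ZMod p),
      cup q Θ (0 : (ℕ → Fin k → ZMod p) → ZMod p) = 0 := cup_zero_right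
    have := BG_cup j 0 2 (η := fun v => yOdd fun a => v a i) h
    rw [BG_ne hij 2 yOdd yOdd_nrm, BG_zero, cup_zero_left, z, smul_zero, add_zero] at this
    rw [this, opN_zero', BG_zero', opD_zero']
  y_loc v v' hv := by unfold yOdd; rw [hv 0 (by omega), hv 1 (by omega), hv 2 (by omega)]
  y_nrm := yOdd_nrm
  y_inv t v := by simp [yOdd, ry]
  y_dl := by
    funext v
    have := congrArg (Int.cast : ℤ → ZMod p) (ry_cocycle (v 0) (v 1) (v 2) (v 3))
    push_cast at this
    simp [dl, sum_range_succ, face, yOdd]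
    rw [← this]; ring
  y_coh χ l h := yOdd_coh k M hM χ l h

end Odd
end DT

namespace DT
open Finset

section Stat
variable {p : ℕ} [Fact p.Prime] {k N L : ℕ}

def blk (u : Fin (N * L) → Fin k → ZMod p) (i : Fin N) (g : Fin k → ZMod p) : Finset (Fin (N * L)) :=
  univ.filter fun x => x.1 / L = i.1 ∧ u x = g

noncomputable def tW (u : Fin (N * L) → Fin k → ZMod p) (i : Fin N) (g : Fin k → ZMod p) : ℝ :=
  max 0 (((blk u i g).card : ℝ) / L - 1 / 2)

theorem card_block (hL : 0 < L) (i : Fin N) :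
    (univ.filter fun x : Fin (N * L) => x.1 / L = i.1).card = L := by
  have : (univ.filter fun x : Fin (N * L) => x.1 / L = i.1).map Fin.valEmbedding =
      Finset.Ico (i.1 * L) (i.1 * L + L) := by
    ext x
    simp only [mem_map, mem_filter, mem_univ, true_and, Fin.valEmbedding_apply, mem_Ico]
    constructor
    · rintro ⟨y, hy, rfl⟩
      rw [Nat.div_eq_iff hL] at hy
      omega
    · rintro ⟨h1, h2⟩
      have h3 : x < N * L := by
        have : (i.1 + 1) * L ≤ N * L := Nat.mul_le_mul_right _ i.2
        rw [add_mul, one_mul] at this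
        omega
      refine ⟨⟨x, h3⟩, ?_, rfl⟩
      rw [Nat.div_eq_iff hL]
      simp only
      omega
  rw [← card_map, this, Nat.card_Ico]; omega

theorem tW_nonneg (u : Fin (N * L) → Fin k → ZMod p) (i : Fin N) (g) : 0 ≤ tW u i g :=
  le_max_left _ _

theorem blk_card_le (hL : 0 < L) (u : Fin (N * L) → Fin k → ZMod p) (i : Fin N) (g) :
    (blk u i g).card ≤ L := by
  refine le_trans (card_le_card ?_) (card_block hL i).le
  intro x hx
  simp only [blk, mem_filter, mem_univ, true_and] at hx ⊢
  exact hx.1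

theorem tW_le (hL : 0 < L) (u : Fin (N * L) → Fin k → ZMod p) (i : Fin N) (g) :
    tW u i g ≤ 1 / 2 := by
  have h := blk_card_le hL u i g
  have h' : ((blk u i g).card : ℝ) ≤ L := by exact_mod_cast h
  have hL' : (0 : ℝ) < L := by exact_mod_cast hL
  have : ((blk u i g).card : ℝ) / L ≤ 1 := by rw [div_le_one hL']; exact h'
  apply max_le <;> linarith

theorem tW_mul (hL : 0 < L) (u : Fin (N * L) → Fin k → ZMod p) (i : Fin N) (g g') (hg : g ≠ g') :
    tW u i g * tW u i g' = 0 := by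
  have hdis : Disjoint (blk u i g) (blk u i g') := by
    rw [Finset.disjoint_left]
    intro x hx hx'
    simp only [blk, mem_filter, mem_univ, true_and] at hx hx'
    exact hg (hx.2.symm.trans hx'.2)
  have h : (blk u i g).card + (blk u i g').card ≤ L := by
    rw [← card_union_of_disjoint hdis]
    refine le_trans (card_le_card ?_) (card_block hL i).le
    intro x hx
    simp only [blk, mem_union, mem_filter, mem_univ, true_and] at hx ⊢
    rcases hx with hx | hx <;> exact hx.1
  have h' : ((blk u i g).card : ℝ) + (blk u i g').card ≤ L := by exact_mod_cast h
  have hL' : (0 : ℝ) < L := by exact_mod_cast hL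
  have h2 : ((blk u i g).card : ℝ) / L + (blk u i g').card / L ≤ 1 := by
    rw [← add_div, div_le_one hL']; exact h'
  rcases le_total (((blk u i g).card : ℝ) / L) (1 / 2) with h3 | h3
  · have : tW u i g = 0 := max_eq_left (by linarith)
    rw [this, zero_mul]
  · have : tW u i g' = 0 := max_eq_left (by linarith)
    rw [this, mul_zero]

theorem tW_act (j : Fin k) (c : ZMod p) (u : Fin (N * L) → Fin k → ZMod p) (i : Fin N) (g) :
    tW (actW j c u) i g = tW u i (g - Pi.single j c) := by
  have h : blk (actW j c u) i g = blk u i (g - Pi.single j c) := by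
    ext x
    rw [blk, blk, mem_filter, mem_filter, eq_sub_iff_add_eq]
    rfl
  unfold tW
  rw [h]

theorem tW_sub_le (hL : 0 < L) (u u' : Fin (N * L) → Fin k → ZMod p) (i : Fin N) (g) :
    |tW u i g - tW u' i g| ≤ ((diffs u u').card : ℝ) / L := by
  have hL' : (0 : ℝ) < L := by exact_mod_cast hL
  have key : ∀ u u' : Fin (N * L) → Fin k → ZMod p,
      (blk u i g).card ≤ (blk u' i g).card + (diffs u u').card := by
    intro u u'
    refine (card_le_card ?_).trans (card_union_le _ _)
    intro x hx
    simp only [blk, diffs, mem_union, mem_filter, mem_univ, true_and] at hx ⊢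
    by_cases h : u x = u' x
    · left; rw [← h]; exact hx
    · right; exact h
  have k1 : ((blk u i g).card : ℝ) ≤ (blk u' i g).card + (diffs u u').card := by
    exact_mod_cast key u u'
  have k2 : ((blk u' i g).card : ℝ) ≤ (blk u i g).card + (diffs u u').card := by
    have e : diffs u' u = diffs u u' := by ext x; simp [diffs, eq_comm]
    have := key u' u
    rw [e] at this
    exact_mod_cast this
  unfold tW
  rw [max_comm, max_comm 0]
  refine (abs_max_sub_max_le_abs _ _ _).trans ?_
  rw [sub_sub_sub_cancel_right, ← sub_div, abs_div, abs_of_pos hL']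
  gcongr
  rw [abs_le]; constructor <;> linarith

theorem tW_half (hL : 0 < L) (u : Fin (N * L) → Fin k → ZMod p) :
    ∃ S : Finset (Fin N), N ≤ S.card + (cuts u).card ∧ ∀ i ∈ S, ∃ g, tW u i g = 1 / 2 := by
  let bl : Fin (N * L) → Fin N := fun x => ⟨x.1 / L, Nat.div_lt_of_lt_mul (lt_of_lt_of_eq x.2 (mul_comm _ _))⟩
  refine ⟨univ \ (cuts u).image bl, ?_, ?_⟩
  · have h1 := card_image_le (s := cuts u) (f := bl)
    have h2 := le_card_sdiff ((cuts u).image bl) (univ : Finset (Fin N))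
    rw [card_univ, Fintype.card_fin] at h2
    omega
  · intro i hi
    simp only [mem_sdiff, mem_univ, true_and, mem_image, not_exists, not_and] at hi
    have h3 : i.1 * L + L ≤ N * L := by
      have : (i.1 + 1) * L ≤ N * L := Nat.mul_le_mul_right _ i.2
      rwa [add_mul, one_mul] at this
    have hconst : ∀ r (hr : r < L), u ⟨i.1 * L + r, by omega⟩ = u ⟨i.1 * L, by omega⟩ := by
      intro r
      induction r with
      | zero => intro _; rfl
      | succ r ih =>
        intro hr
        rw [← ih (by omega)]
        by_contra hne
        apply hi ⟨i.1 * L + r, by omega⟩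
        · simp only [cuts, mem_filter, mem_univ, true_and]
          exact ⟨by omega, fun h => hne h.symm⟩
        · ext
          simp only [bl]
          rw [Nat.div_eq_iff hL]
          omega
    refine ⟨u ⟨i.1 * L, by omega⟩, ?_⟩
    have hb : (blk u i (u ⟨i.1 * L, by omega⟩)).card = L := by
      refine Eq.trans ?_ (card_block hL i)
      congr 1
      unfold blk
      apply filter_congr
      intro x _
      refine ⟨fun h => h.1, fun h => ⟨h, ?_⟩⟩
      rw [Nat.div_eq_iff hL] at h
      have := hconst (x.1 - i.1 * L) (by omega)
      rw [← this]
      congr 1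
      ext; simp only; omega
    unfold tW
    rw [hb, div_self (by positivity)]
    norm_num

/-- limit configurations -/
def TT (p k N s : ℕ) : Set (Fin N → (Fin k → ZMod p) → ℝ) :=
  {t | (∀ i g, 0 ≤ t i g ∧ t i g ≤ 1 / 2) ∧ (∀ i g g', g ≠ g' → t i g * t i g' = 0) ∧
    ∃ S : Finset (Fin N), N ≤ S.card + s ∧ ∀ i ∈ S, ∃ g, t i g = 1 / 2}

theorem TT_closed (s : ℕ) : IsClosed (TT p k N s) := by
  have c : ∀ i g, Continuous fun t : Fin N → (Fin k → ZMod p) → ℝ => t i g := fun i g => by fun_prop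
  have e : TT p k N s = (⋂ i, ⋂ g, {t | 0 ≤ t i g ∧ t i g ≤ 1 / 2}) ∩
      ((⋂ i, ⋂ g, ⋂ g', ⋂ (_ : g ≠ g'), {t | t i g * t i g' = 0}) ∩
      ⋃ S ∈ {S : Finset (Fin N) | N ≤ S.card + s}, ⋂ i ∈ S, ⋃ g, {t | t i g = 1 / 2}) := by
    ext t; simp [TT]
  rw [e]
  refine IsClosed.inter ?_ (IsClosed.inter ?_ ?_)
  · refine isClosed_iInter fun i => isClosed_iInter fun g => ?_
    exact (isClosed_le continuous_const (c i g)).inter (isClosed_le (c i g) continuous_const)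
  · refine isClosed_iInter fun i => isClosed_iInter fun g => isClosed_iInter fun g' =>
      isClosed_iInter fun _ => ?_
    exact isClosed_eq ((c i g).mul (c i g')) continuous_const
  · refine Set.Finite.isClosed_biUnion (Set.toFinite _) fun S _ => ?_
    refine isClosed_biInter fun i _ => ?_
    exact isClosed_iUnion_of_finite fun g => isClosed_eq (c i g) continuous_const

theorem TT_compact (s : ℕ) : IsCompact (TT p k N s) := by
  refine IsCompact.of_isClosed_subset
    (isCompact_univ_pi (fun _ : Fin N => isCompact_univ_pi
      (fun _ : Fin k → ZMod p => isCompact_Icc (a := (0 : ℝ)) (b := 1 / 2))))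
    (TT_closed s) ?_
  intro t ht i _ g _
  exact ht.1 i g

theorem tW_mem (hL : 0 < L) (s : ℕ) (u : Fin (N * L) → Fin k → ZMod p) (hu : (cuts u).card ≤ s) :
    tW u ∈ TT p k N s := by
  obtain ⟨S, h1, h2⟩ := tW_half hL u
  exact ⟨fun i g => ⟨tW_nonneg u i g, tW_le hL u i g⟩, fun i g g' h => tW_mul hL u i g g' h,
    S, by omega, h2⟩

end Stat
end DT

namespace DT
open Finset

section Lab
open Complex Filter Topology
variable {p : ℕ} [Fact p.Prime]

noncomputable def lab (p : ℕ) (z : ℂ) : ZMod p := ((⌊(p : ℝ) * arg z / (2 * Real.pi)⌋ : ℤ) : ZMod p)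

theorem lab_shift (z : ℂ) (a : ℝ) (m : ℤ) (h : arg z = a + 2 * Real.pi * m) :
    lab p z = ((⌊(p : ℝ) * a / (2 * Real.pi)⌋ : ℤ) : ZMod p) := by
  have hpi := Real.pi_pos
  have : (p : ℝ) * arg z / (2 * Real.pi) = (p : ℝ) * a / (2 * Real.pi) + ((p * m : ℤ) : ℝ) := by
    rw [h]; push_cast; field_simp
  rw [lab, this, Int.floor_add_intCast]
  push_cast
  simp

theorem lab_mul (c : ZMod p) (z : ℂ) (hz : z ≠ 0) :
    lab p (ZMod.stdAddChar c * z) = lab p z + c := by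
  have hpi := Real.pi_pos
  have hp : (0 : ℝ) < p := by exact_mod_cast (Fact.out : p.Prime).pos
  have hp' : (p : ℂ) ≠ 0 := by exact_mod_cast hp.ne'
  obtain ⟨j, rfl⟩ := ZMod.intCast_surjective c
  have hw : (ZMod.stdAddChar (j : ZMod p) : ℂ) = exp (((2 * Real.pi * j / p : ℝ) : ℂ) * I) := by
    rw [ZMod.stdAddChar_coe]; congr 1; push_cast; ring
  have h1 : ((arg (ZMod.stdAddChar (j : ZMod p) * z) : ℝ) : Real.Angle) =
      ((2 * Real.pi * j / p + arg z : ℝ) : Real.Angle) := by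
    rw [hw, arg_mul_coe_angle (exp_ne_zero _) hz, Real.Angle.coe_add]
    congr 1
    rw [arg_exp_mul_I]
    exact Real.Angle.coe_toIocMod _ _
  obtain ⟨m, hm⟩ := Real.Angle.angle_eq_iff_two_pi_dvd_sub.1 h1
  rw [lab_shift _ (2 * Real.pi * j / p + arg z) m (by linarith)]
  have : (p : ℝ) * (2 * Real.pi * j / p + arg z) / (2 * Real.pi) =
      (p : ℝ) * arg z / (2 * Real.pi) + (j : ℝ) := by
    field_simp; ring
  rw [this, Int.floor_add_intCast, lab]
  push_cast; ring

theorem lab_near (z₀ : ℂ) (hz₀ : z₀ ≠ 0) :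
    ∃ i : ZMod p, ∀ᶠ z in 𝓝 z₀, z ≠ 0 ∧ (lab p z = i ∨ lab p z = i + 1) := by
  have hpi := Real.pi_pos
  have hp : (0 : ℝ) < p := by exact_mod_cast (Fact.out : p.Prime).pos
  refine ⟨((⌊(p : ℝ) * arg z₀ / (2 * Real.pi) - 1 / 2⌋ : ℤ) : ZMod p), ?_⟩
  have hc : ContinuousAt (fun z : ℂ => arg (z / z₀)) z₀ := by
    apply ContinuousAt.comp (g := arg)
    · rw [div_self hz₀]; exact continuousAt_arg (by simp)
    · fun_prop
  have h1 : ∀ᶠ z in 𝓝 z₀, |arg (z / z₀)| < Real.pi / p := by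
    have : ContinuousAt (fun z : ℂ => |arg (z / z₀)|) z₀ := hc.abs
    apply this.eventually_lt continuousAt_const
    rw [div_self hz₀]; simp; positivity
  filter_upwards [h1, isOpen_ne.mem_nhds hz₀] with z hz hz0
  refine ⟨hz0, ?_⟩
  have hne : z / z₀ ≠ 0 := div_ne_zero hz0 hz₀
  have h2 : ((arg z : ℝ) : Real.Angle) = ((arg z₀ + arg (z / z₀) : ℝ) : Real.Angle) := by
    rw [Real.Angle.coe_add, ← arg_mul_coe_angle hz₀ hne, mul_div_cancel₀ _ hz₀]
  obtain ⟨m, hm⟩ := Real.Angle.angle_eq_iff_two_pi_dvd_sub.1 h2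
  rw [lab_shift z (arg z₀ + arg (z / z₀)) m (by linarith)]
  set A := (p : ℝ) * arg z₀ / (2 * Real.pi) with hA
  set δ := (p : ℝ) * arg (z / z₀) / (2 * Real.pi) with hδ
  have e : (p : ℝ) * (arg z₀ + arg (z / z₀)) / (2 * Real.pi) = A + δ := by rw [hA, hδ]; ring
  rw [e]
  rw [abs_lt, lt_div_iff₀ hp, neg_lt, lt_div_iff₀ hp] at hz
  have d1 : -(1 / 2) < δ := by
    rw [hδ, lt_div_iff₀ (by positivity)]; linarith
  have d2 : δ < 1 / 2 := by
    rw [hδ, div_lt_iff₀ (by positivity)]; linarith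
  have f1 := Int.floor_le (A - 1 / 2)
  have f2 := Int.lt_floor_add_one (A - 1 / 2)
  set n := ⌊A - 1 / 2⌋
  rcases lt_or_ge (A + δ) (n + 1) with h | h
  · left
    have : ⌊A + δ⌋ = n := by rw [Int.floor_eq_iff]; constructor <;> linarith
    rw [this]
  · right
    have : ⌊A + δ⌋ = n + 1 := by rw [Int.floor_eq_iff]; push_cast; constructor <;> linarith
    rw [this]; push_cast; rfl

theorem lab_real_near (z₀ : ℂ) (hz₀ : z₀ ≠ 0) (hr : z₀.im = 0) :
    ∃ i : ZMod p, ∀ᶠ z in 𝓝 z₀, z ≠ 0 ∧ (z.im = 0 → lab p z = i) := by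
  refine ⟨lab p z₀, ?_⟩
  have hre : z₀.re ≠ 0 := fun h => hz₀ (Complex.ext h hr)
  rcases lt_or_gt_of_ne hre with h | h
  · have hU : {z : ℂ | z.re < 0} ∈ 𝓝 z₀ := (isOpen_lt continuous_re continuous_const).mem_nhds h
    filter_upwards [hU] with z hz
    refine ⟨fun h0 => by simp [h0] at hz, fun hi => ?_⟩
    have a1 : arg z = Real.pi := arg_eq_pi_iff.2 ⟨hz, hi⟩
    have a2 : arg z₀ = Real.pi := arg_eq_pi_iff.2 ⟨h, hr⟩
    rw [lab, lab, a1, a2]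
  · have hU : {z : ℂ | 0 < z.re} ∈ 𝓝 z₀ := (isOpen_lt continuous_const continuous_re).mem_nhds h
    filter_upwards [hU] with z hz
    refine ⟨fun h0 => by simp [h0] at hz, fun hi => ?_⟩
    have a1 : arg z = 0 := arg_eq_zero_iff.2 ⟨le_of_lt hz, hi⟩
    have a2 : arg z₀ = 0 := arg_eq_zero_iff.2 ⟨le_of_lt h, hr⟩
    rw [lab, lab, a1, a2]

theorem yOdd_zero (hp : p ≠ 2) (v : ℕ → ZMod p) (i : ZMod p) (h : ∀ a, v a = i ∨ v a = i + 1) :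
    yOdd v = 0 := by
  have hp1 := (Fact.out : p.Prime).two_le
  have e1 : (1 : ZMod p).valMinAbs = 1 := by
    have := ZMod.valMinAbs_natCast_of_le_half (n := p) (a := 1) (by omega)
    simpa using this
  have hne : (1 : ZMod p).valMinAbs * 2 ≠ p := by rw [e1]; omega
  have e2 : (-1 : ZMod p).valMinAbs = -1 := by
    rw [ZMod.valMinAbs_neg_of_ne_half, e1]
    intro h
    apply hne
    rw [e1]
    have h1 : (1 : ZMod p).val = 1 := by
      haveI : Fact (1 < p) := ⟨by omega⟩
      exact ZMod.val_one p
    omega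
  unfold yOdd ry
  have : (v 1 - v 0).valMinAbs + (v 2 - v 1).valMinAbs - (v 2 - v 0).valMinAbs = 0 := by
    rcases h 0 with h0 | h0 <;> rcases h 1 with h1 | h1 <;> rcases h 2 with h2 | h2 <;>
      rw [h0, h1, h2] <;> simp [e1, e2]
  rw [this]; simp

end Lab
end DT

namespace DT
open Finset

section Lim
open Filter Topology
variable {p : ℕ} [Fact p.Prime] {k N : ℕ}

def shT (j : Fin k) (c : ZMod p) (t : Fin N → (Fin k → ZMod p) → ℝ) :
    Fin N → (Fin k → ZMod p) → ℝ := fun i g => t i (g - Pi.single j c)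

open Classical in
noncomputable def lw {L : ℕ} (hM : 0 < N * L)
    (x : (Fin k → ZMod p) × ((Fin N → (Fin k → ZMod p) → ℝ) → ℂ))
    (u : Fin (N * L) → Fin k → ZMod p) : ZMod p :=
  if x.2 (tW u) = 0 then ∑ j, x.1 j * u ⟨0, hM⟩ j else lab p (x.2 (tW u))

theorem lw_act {L : ℕ} (hM : 0 < N * L)
    (x : (Fin k → ZMod p) × ((Fin N → (Fin k → ZMod p) → ℝ) → ℂ))
    (hx : ∀ j c t, x.2 (shT j c t) = ZMod.stdAddChar (c * x.1 j) * x.2 t) (j : Fin k) (c : ZMod p)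
    (u : Fin (N * L) → Fin k → ZMod p) :
    lw hM x (actW j c u) = lw hM x u + c * x.1 j := by
  have e : tW (actW j c u) = shT j c (tW u) := by
    funext i g; exact tW_act j c u i g
  have hne : (ZMod.stdAddChar (c * x.1 j) : ℂ) ≠ 0 := by
    rw [ZMod.stdAddChar_apply]; exact Circle.coe_ne_zero _
  unfold lw
  rw [e, hx]
  by_cases h : x.2 (tW u) = 0
  · rw [if_pos (by rw [h, mul_zero]), if_pos h]
    simp only [actW, actG, Pi.add_apply, mul_add, sum_add_distrib]
    congr 1
    rw [Finset.sum_eq_single j]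
    · simp [mul_comm]
    · intro b _ hb; simp [hb]
    · simp
  · rw [if_neg (mul_ne_zero hne h), if_neg h, lab_mul _ _ h]

theorem limit_thm (D : ℕ) (y : (ℕ → ZMod p) → ZMod p)
    (S : ∀ M (hM : 0 < M), StepData p k M hM D) (hS : ∀ M hM, (S M hM).y = y) (hN : 0 < N)
    (fs : List ((Fin k → ZMod p) × ((Fin N → (Fin k → ZMod p) → ℝ) → ℂ)))
    (hne : ∀ x ∈ fs, x.1 ≠ 0) (hc : ∀ x ∈ fs, Continuous x.2)
    (hsh : ∀ x ∈ fs, ∀ j c t, x.2 (shT j c t) = ZMod.stdAddChar (c * x.1 j) * x.2 t)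
    (hloc : ∀ x ∈ fs, ∀ t₀, x.2 t₀ ≠ 0 → ∃ U ∈ 𝓝 t₀, ∀ τ : ℕ → Fin N → (Fin k → ZMod p) → ℝ,
      (∀ a, τ a ∈ U) → (∀ a, x.2 (τ a) ≠ 0) ∧ y (fun a => lab p (x.2 (τ a))) = 0) :
    ∃ t ∈ TT p k N (D * fs.length), ∀ x ∈ fs, x.2 t = 0 := by
  have hM : ∀ l : ℕ, 0 < N * (l + 1) := fun l => Nat.mul_pos hN (Nat.succ_pos _)
  have h1 : ∀ l : ℕ, ∃ v : ℕ → Fin (N * (l + 1)) → Fin k → ZMod p, Sm (D * fs.length) v ∧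
      ∀ x ∈ fs, ∃ s, y (fun a => lw (hM l) x (v (s + a))) ≠ 0 := by
    intro l
    obtain ⟨v, hv, hv'⟩ := combinatorial (S (N * (l + 1)) (hM l))
      (fs.map fun x => (x.1, lw (hM l) x)) (by
        intro z hz
        obtain ⟨x, hx, rfl⟩ := List.mem_map.1 hz
        exact ⟨hne x hx, fun j t u => lw_act (hM l) x (hsh x hx) j t u⟩)
    rw [List.length_map] at hv
    refine ⟨v, hv, fun x hx => ?_⟩
    obtain ⟨s, hs⟩ := hv' _ (List.mem_map_of_mem hx)
    rw [hS] at hs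
    exact ⟨s, hs⟩
  choose v hv hv' using h1
  obtain ⟨t, ht, φ, hφ, hlim⟩ := (TT_compact (p := p) (k := k) (N := N) (D * fs.length)).tendsto_subseq
    (x := fun l => tW (v l 0)) (fun l => tW_mem (Nat.succ_pos l) _ _ ((hv l).2 0))
  refine ⟨t, ht, fun x hx => ?_⟩
  by_contra hxt
  obtain ⟨U, hU, hτ⟩ := hloc x hx t hxt
  obtain ⟨ε, hε, hball⟩ := Metric.mem_nhds_iff.1 hU
  have hd : Tendsto (fun l : ℕ => (((D * fs.length : ℕ) : ℝ)) / ((φ l : ℝ) + 1)) atTop (𝓝 0) := by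
    have := (tendsto_const_div_atTop_nhds_zero_nat (((D * fs.length : ℕ) : ℝ))).comp
      ((tendsto_add_atTop_nat 1).comp hφ.tendsto_atTop)
    refine this.congr fun l => ?_
    simp
  have e1 := hd.eventually_lt_const (show (0 : ℝ) < ε / 2 by positivity)
  have e2 : ∀ᶠ l in atTop, dist (tW (v (φ l) 0)) t < ε / 2 :=
    (Metric.tendsto_nhds.1 hlim) (ε / 2) (by positivity)
  obtain ⟨l, hl1, hl2⟩ := (e1.and e2).exists
  obtain ⟨s, hs⟩ := hv' (φ l) x hx
  have hin : ∀ a, tW (v (φ l) (s + a)) ∈ U := by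
    intro a
    apply hball
    rw [Metric.mem_ball]
    have h3 : dist (tW (v (φ l) (s + a))) (tW (v (φ l) 0)) ≤ ε / 2 := by
      rw [dist_pi_le_iff (by positivity)]
      intro i
      rw [dist_pi_le_iff (by positivity)]
      intro g
      rw [Real.dist_eq]
      refine (tW_sub_le (Nat.succ_pos _) _ _ i g).trans (le_trans ?_ hl1.le)
      push_cast
      gcongr
      exact_mod_cast (hv (φ l)).1 _ _
    calc _ ≤ _ := dist_triangle _ (tW (v (φ l) 0)) _
      _ < ε := by linarith
  obtain ⟨g1, g2⟩ := hτ (fun a => tW (v (φ l) (s + a))) hin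
  apply hs
  rw [← g2]
  congr 1
  funext a
  unfold lw
  rw [if_neg (g1 a)]

theorem limit_odd (hp : p ≠ 2) (hN : 0 < N)
    (fs : List ((Fin k → ZMod p) × ((Fin N → (Fin k → ZMod p) → ℝ) → ℂ)))
    (hne : ∀ x ∈ fs, x.1 ≠ 0) (hc : ∀ x ∈ fs, Continuous x.2)
    (hsh : ∀ x ∈ fs, ∀ j c t, x.2 (shT j c t) = ZMod.stdAddChar (c * x.1 j) * x.2 t) :
    ∃ t ∈ TT p k N (2 * fs.length), ∀ x ∈ fs, x.2 t = 0 := by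
  refine limit_thm 2 yOdd (fun M hM => stepOdd k M hM) (fun _ _ => rfl) hN fs hne hc hsh ?_
  intro x hx t₀ ht₀
  obtain ⟨i, hi⟩ := lab_near (p := p) (x.2 t₀) ht₀
  refine ⟨_, (hc x hx).continuousAt.eventually hi, fun τ hτ => ?_⟩
  exact ⟨fun a => (hτ a).1, yOdd_zero hp _ i fun a => (hτ a).2⟩

theorem limit_two (hN : 0 < N)
    (fs : List ((Fin k → ZMod 2) × ((Fin N → (Fin k → ZMod 2) → ℝ) → ℂ)))
    (hne : ∀ x ∈ fs, x.1 ≠ 0) (hc : ∀ x ∈ fs, Continuous x.2) (hr : ∀ x ∈ fs, ∀ t, (x.2 t).im = 0)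
    (hsh : ∀ x ∈ fs, ∀ j c t, x.2 (shT j c t) = ZMod.stdAddChar (c * x.1 j) * x.2 t) :
    ∃ t ∈ TT 2 k N (1 * fs.length), ∀ x ∈ fs, x.2 t = 0 := by
  refine limit_thm 1 (fun v => v 1 - v 0) (fun M hM => step2 k M hM) (fun _ _ => rfl) hN fs hne hc
    hsh ?_
  intro x hx t₀ ht₀
  obtain ⟨i, hi⟩ := lab_real_near (p := 2) (x.2 t₀) ht₀ (hr x hx t₀)
  refine ⟨_, (hc x hx).continuousAt.eventually hi, fun τ hτ => ?_⟩
  refine ⟨fun a => (hτ a).1, ?_⟩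
  simp only
  rw [(hτ 0).2 (hr x hx _), (hτ 1).2 (hr x hx _), sub_self]

end Lim
end DT

namespace DT
open Finset

section Four
variable {p : ℕ} [Fact p.Prime] {k N m : ℕ}

noncomputable def chr (χ g : Fin k → ZMod p) : ℂ := ZMod.stdAddChar (∑ j, χ j * g j)

theorem chr_add (χ g h : Fin k → ZMod p) : chr χ (g + h) = chr χ g * chr χ h := by
  unfold chr
  rw [← AddChar.map_add_eq_mul, ← sum_add_distrib]
  simp only [Pi.add_apply, mul_add]

theorem chr_add_left (χ χ' g : Fin k → ZMod p) : chr (χ + χ') g = chr χ g * chr χ' g := by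
  unfold chr
  rw [← AddChar.map_add_eq_mul, ← sum_add_distrib]
  simp only [Pi.add_apply, add_mul]

theorem chr_zero_left (g : Fin k → ZMod p) : chr 0 g = 1 := by simp [chr]
theorem chr_zero (g : Fin k → ZMod p) : chr g 0 = 1 := by simp [chr]

theorem chr_single (χ : Fin k → ZMod p) (j : Fin k) (c : ZMod p) :
    chr χ (Pi.single j c) = ZMod.stdAddChar (c * χ j) := by
  unfold chr
  congr 1
  rw [Finset.sum_eq_single j]
  · simp [mul_comm]
  · intro b _ hb; simp [hb]
  · simp

theorem chr_comm (χ g : Fin k → ZMod p) : chr χ g = chr g χ := by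
  unfold chr; simp only [mul_comm]

theorem chr_neg_left (χ g : Fin k → ZMod p) : chr (-χ) g = starRingEnd ℂ (chr χ g) := by
  unfold chr
  rw [← AddChar.map_neg_eq_conj]
  simp

theorem chr_sum (x : Fin k → ZMod p) (hx : x ≠ 0) : ∑ χ : Fin k → ZMod p, chr χ x = 0 := by
  obtain ⟨j, hj⟩ := Function.ne_iff.1 hx
  have h1 : ∑ χ : Fin k → ZMod p, chr χ x = chr x (Pi.single j (x j)⁻¹) * ∑ χ, chr χ x := by
    rw [mul_sum, ← Equiv.sum_comp (Equiv.addLeft (Pi.single j (x j)⁻¹))]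
    apply sum_congr rfl
    intro χ _
    rw [Equiv.coe_addLeft, chr_add_left, chr_comm x]
  rw [chr_single, inv_mul_cancel₀ hj] at h1
  have h2 : (ZMod.stdAddChar (1 : ZMod p) : ℂ) ≠ 1 := by
    intro h
    have : (1 : ZMod p) = 0 := ZMod.injective_stdAddChar (by rw [h, AddChar.map_zero_eq_one])
    exact one_ne_zero this
  have h3 : (ZMod.stdAddChar (1 : ZMod p) - 1 : ℂ) * ∑ χ : Fin k → ZMod p, chr χ x = 0 := by
    rw [sub_mul, ← h1]; ring
  rcases mul_eq_zero.1 h3 with h | h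
  · exact absurd (sub_eq_zero.1 h) h2
  · exact h

theorem fourier_const (a : (Fin k → ZMod p) → ℂ) (h : ∀ χ, χ ≠ 0 → ∑ g, chr χ g * a g = 0) (x) :
    (Fintype.card (Fin k → ZMod p) : ℂ) * a x = ∑ g, a g := by
  have e1 : ∑ χ : Fin k → ZMod p, chr χ (-x) * ∑ g, chr χ g * a g = ∑ g, a g := by
    rw [Finset.sum_eq_single 0]
    · simp [chr_zero_left]
    · intro χ _ hχ; rw [h χ hχ, mul_zero]
    · simp
  rw [← e1]
  simp only [mul_sum]
  rw [sum_comm, Finset.sum_eq_single x]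
  · have : ∀ χ : Fin k → ZMod p, chr χ (-x) * (chr χ x * a x) = a x := by
      intro χ
      rw [← mul_assoc, ← chr_add, neg_add_cancel, chr_zero, one_mul]
    simp [this]
  · intro g _ hg
    have : ∀ χ : Fin k → ZMod p, chr χ (-x) * (chr χ g * a g) = chr χ (g - x) * a g := by
      intro χ
      rw [← mul_assoc, ← chr_add, neg_add_eq_sub]
    simp only [this]
    rw [← sum_mul, chr_sum _ (sub_ne_zero.2 hg), zero_mul]
  · simp

theorem TT_mono {s s' : ℕ} (h : s ≤ s') : TT p k N s ⊆ TT p k N s' := by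
  rintro t ⟨h1, h2, S, h3, h4⟩
  exact ⟨h1, h2, S, by omega, h4⟩

noncomputable def fCK (F : (Fin N → (Fin k → ZMod p) → ℝ) → (Fin k → ZMod p) → Fin m → ℝ)
    (χ : Fin k → ZMod p) (κ : Fin m) (t : Fin N → (Fin k → ZMod p) → ℝ) : ℂ :=
  ∑ g, chr χ g * (F t g κ : ℂ)

theorem fCK_sh (F : (Fin N → (Fin k → ZMod p) → ℝ) → (Fin k → ZMod p) → Fin m → ℝ)
    (hF : ∀ j c t g κ, F (shT j c t) g κ = F t (g - Pi.single j c) κ) (χ κ) (j c t) :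
    fCK F χ κ (shT j c t) = ZMod.stdAddChar (c * χ j) * fCK F χ κ t := by
  unfold fCK
  rw [← chr_single, mul_sum, ← Equiv.sum_comp (Equiv.addLeft (Pi.single j c))]
  apply sum_congr rfl
  intro g _
  rw [Equiv.coe_addLeft, hF, add_sub_cancel_left, chr_add]
  ring

theorem fCK_neg (F : (Fin N → (Fin k → ZMod p) → ℝ) → (Fin k → ZMod p) → Fin m → ℝ) (χ κ t) :
    fCK F (-χ) κ t = starRingEnd ℂ (fCK F χ κ t) := by
  unfold fCK
  rw [map_sum]
  apply sum_congr rfl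
  intro g _
  rw [map_mul, Complex.conj_ofReal, chr_neg_left]

theorem fCK_cont (F : (Fin N → (Fin k → ZMod p) → ℝ) → (Fin k → ZMod p) → Fin m → ℝ)
    (hF : ∀ g κ, Continuous fun t => F t g κ) (χ κ) : Continuous (fCK F χ κ) := by
  unfold fCK
  refine continuous_finset_sum _ fun g _ => ?_
  exact continuous_const.mul (Complex.continuous_ofReal.comp (hF g κ))

open Classical in
theorem exists_half (hp : p ≠ 2) : ∃ Hs : Finset (Fin k → ZMod p), 2 * Hs.card ≤ p ^ k - 1 ∧
    (∀ χ ∈ Hs, χ ≠ 0) ∧ ∀ χ, χ ≠ 0 → χ ∈ Hs ∨ -χ ∈ Hs := by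
  let e := Fintype.equivFin (Fin k → ZMod p)
  have hne : ∀ χ : Fin k → ZMod p, χ ≠ 0 → χ ≠ -χ := by
    intro χ hχ h
    apply hχ
    funext j
    have h1 : χ j = - χ j := congrFun h j
    have h2 : (2 : ZMod p) * χ j = 0 := by rw [two_mul]; nth_rewrite 2 [h1]; ring
    rcases mul_eq_zero.1 h2 with h3 | h3
    · exfalso
      have h4 : ((2 : ℕ) : ZMod p) = 0 := by exact_mod_cast h3
      rw [ZMod.natCast_eq_zero_iff] at h4
      have := (Nat.prime_dvd_prime_iff_eq (Fact.out : p.Prime) Nat.prime_two).1 h4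
      exact hp this
    · exact h3
  let Hs : Finset (Fin k → ZMod p) := univ.filter fun χ => e χ < e (-χ)
  have h0 : ∀ χ ∈ Hs, χ ≠ 0 := by
    intro χ hχ h
    simp [Hs, h] at hχ
  refine ⟨Hs, ?_, h0, ?_⟩
  · have hd : Disjoint Hs (Hs.image Neg.neg) := by
      rw [Finset.disjoint_left]
      intro χ h1 h2
      obtain ⟨χ', h3, rfl⟩ := mem_image.1 h2
      simp only [Hs, mem_filter, mem_univ, true_and, neg_neg] at h1 h3
      exact lt_asymm h1 h3
    have hsub : Hs ∪ Hs.image Neg.neg ⊆ univ.erase 0 := by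
      intro χ hχ
      rw [mem_erase]
      refine ⟨?_, mem_univ _⟩
      rcases mem_union.1 hχ with h | h
      · exact h0 χ h
      · obtain ⟨χ', h3, rfl⟩ := mem_image.1 h
        exact neg_ne_zero.2 (h0 χ' h3)
    have := card_le_card hsub
    rw [card_union_of_disjoint hd, card_image_of_injective _ neg_injective,
      card_erase_of_mem (mem_univ _), card_univ, Fintype.card_fun, ZMod.card, Fintype.card_fin] at this
    omega
  · intro χ hχ
    rcases lt_or_gt_of_ne (fun h => hne χ hχ (e.injective h)) with h | h
    · left; simpa [Hs] using h
    · right; simpa [Hs] using h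

theorem equalize (hN : 0 < N)
    (F : (Fin N → (Fin k → ZMod p) → ℝ) → (Fin k → ZMod p) → Fin m → ℝ)
    (hc : ∀ g κ, Continuous fun t => F t g κ)
    (hF : ∀ j c t g κ, F (shT j c t) g κ = F t (g - Pi.single j c) κ) :
    ∃ t ∈ TT p k N ((p ^ k - 1) * m), ∀ κ g, ((p ^ k : ℕ) : ℝ) * F t g κ = ∑ g', F t g' κ := by
  classical
  have key : ∃ t ∈ TT p k N ((p ^ k - 1) * m), ∀ κ χ, χ ≠ 0 → fCK F χ κ t = 0 := by
    by_cases hp : p = 2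
    · subst hp
      let Hs : Finset (Fin k → ZMod 2) := univ.erase 0
      obtain ⟨t, ht, h⟩ := limit_two hN
        ((Hs ×ˢ (univ : Finset (Fin m))).toList.map fun x => (x.1, fCK F x.1 x.2))
        (by
          intro x hx
          obtain ⟨y, hy, rfl⟩ := List.mem_map.1 hx
          rw [mem_toList, mem_product] at hy
          exact (mem_erase.1 hy.1).1)
        (by
          intro x hx
          obtain ⟨y, hy, rfl⟩ := List.mem_map.1 hx
          exact fCK_cont F hc _ _)
        (by
          intro x hx t
          obtain ⟨y, hy, rfl⟩ := List.mem_map.1 hx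
          rw [← Complex.conj_eq_iff_im, ← fCK_neg]
          have : -y.1 = y.1 := by funext j; exact ZMod.neg_eq_self_mod_two _
          rw [this])
        (by
          intro x hx
          obtain ⟨y, hy, rfl⟩ := List.mem_map.1 hx
          exact fCK_sh F hF _ _)
      refine ⟨t, TT_mono ?_ ht, fun κ χ hχ => ?_⟩
      · rw [List.length_map, length_toList, card_product, card_erase_of_mem (mem_univ _), card_univ,
          Fintype.card_fun, ZMod.card, Fintype.card_fin, card_univ, Fintype.card_fin, one_mul]
      · exact h (χ, fCK F χ κ) (List.mem_map.2 ⟨(χ, κ), by simp [Hs, hχ], rfl⟩)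
    · obtain ⟨Hs, h1, h2, h3⟩ := exists_half (k := k) hp
      obtain ⟨t, ht, h⟩ := limit_odd hp hN
        ((Hs ×ˢ (univ : Finset (Fin m))).toList.map fun x => (x.1, fCK F x.1 x.2))
        (by
          intro x hx
          obtain ⟨y, hy, rfl⟩ := List.mem_map.1 hx
          rw [mem_toList, mem_product] at hy
          exact h2 _ hy.1)
        (by
          intro x hx
          obtain ⟨y, hy, rfl⟩ := List.mem_map.1 hx
          exact fCK_cont F hc _ _)
        (by
          intro x hx
          obtain ⟨y, hy, rfl⟩ := List.mem_map.1 hx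
          exact fCK_sh F hF _ _)
      refine ⟨t, TT_mono ?_ ht, fun κ χ hχ => ?_⟩
      · rw [List.length_map, length_toList, card_product, card_univ, Fintype.card_fin, ← mul_assoc]
        exact Nat.mul_le_mul_right _ h1
      · rcases h3 χ hχ with h4 | h4
        · exact h (χ, fCK F χ κ) (List.mem_map.2 ⟨(χ, κ), by simp [h4], rfl⟩)
        · have := h (-χ, fCK F (-χ) κ) (List.mem_map.2 ⟨(-χ, κ), by simp [h4], rfl⟩)
          simp only [fCK_neg] at this
          exact (map_eq_zero _).1 this
  obtain ⟨t, ht, h⟩ := key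
  refine ⟨t, ht, fun κ g => ?_⟩
  have := fourier_const (fun g => (F t g κ : ℂ)) (fun χ hχ => h κ χ hχ) g
  rw [Fintype.card_fun, ZMod.card, Fintype.card_fin] at this
  exact_mod_cast this

end Four
end DT

namespace DT
open Finset

section LinA
open Matrix
variable {p : ℕ} [Fact p.Prime] {k N d : ℕ}

noncomputable def wt (t : Fin N → (Fin k → ZMod p) → ℝ) (i : Fin N) : ℝ := ∑ g, t i g

noncomputable def MM (a : Fin N → Fin (d + 1) → ℝ) (t : Fin N → (Fin k → ZMod p) → ℝ) :
    Matrix (Fin (d + 1)) (Fin (d + 1)) ℝ := ∑ i, wt t i • vecMulVec (a i) (a i)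

noncomputable def bb (a : Fin N → Fin (d + 1) → ℝ) (t : Fin N → (Fin k → ZMod p) → ℝ) :
    Fin (d + 1) → ℝ := (MM a t).adjugate *ᵥ Pi.single 0 1

noncomputable def FF (a : Fin N → Fin (d + 1) → ℝ) (t : Fin N → (Fin k → ZMod p) → ℝ)
    (g : Fin k → ZMod p) (κ : Fin (d + 1)) : ℝ := ∑ i, t i g * (a i ⬝ᵥ bb a t) * a i κ

theorem MM_mulVec (a : Fin N → Fin (d + 1) → ℝ) (t : Fin N → (Fin k → ZMod p) → ℝ) (z) :
    MM a t *ᵥ z = ∑ i, (wt t i * (a i ⬝ᵥ z)) • a i := by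
  unfold MM
  rw [Matrix.sum_mulVec]
  apply sum_congr rfl
  intro i _
  rw [Matrix.smul_mulVec, Matrix.vecMulVec_mulVec, mul_smul]
  simp

theorem MM_sh (a : Fin N → Fin (d + 1) → ℝ) (j c) (t : Fin N → (Fin k → ZMod p) → ℝ) :
    MM a (shT j c t) = MM a t := by
  have : wt (shT j c t) = wt t := by
    funext i
    unfold wt shT
    exact Equiv.sum_comp (Equiv.subRight (Pi.single j c)) (t i)
  unfold MM
  rw [this]

theorem FF_sh (a : Fin N → Fin (d + 1) → ℝ) (j c) (t : Fin N → (Fin k → ZMod p) → ℝ) (g κ) :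
    FF a (shT j c t) g κ = FF a t (g - Pi.single j c) κ := by
  unfold FF bb
  rw [MM_sh]
  rfl

theorem FF_cont (a : Fin N → Fin (d + 1) → ℝ) (g : Fin k → ZMod p) (κ) :
    Continuous fun t => FF a t g κ := by
  have h1 : Continuous fun t : Fin N → (Fin k → ZMod p) → ℝ => MM a t := by
    unfold MM wt
    fun_prop
  have h2 : Continuous fun t : Fin N → (Fin k → ZMod p) → ℝ => bb a t := by
    unfold bb
    exact h1.matrix_adjugate.matrix_mulVec continuous_const
  unfold FF
  refine continuous_finset_sum _ fun i _ => ?_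
  refine Continuous.mul (Continuous.mul (by fun_prop) ?_) continuous_const
  exact continuous_const.dotProduct h2

theorem count_lem {G : Type*} [Fintype G] [DecidableEq G] (n : ℕ) (hG : Fintype.card G = n)
    (S : G → Finset (Fin N)) (hN : N = (d + 1) * n)
    (hd : ∀ g g', g ≠ g' → Disjoint (S g) (S g')) (hc : ∀ g, d + 1 ≤ (S g).card) :
    (∀ g, (S g).card = d + 1) ∧ ∀ i, ∃ g, i ∈ S g := by
  have h1 : (univ.biUnion S).card = ∑ g, (S g).card :=
    card_biUnion fun g _ g' _ h => hd g g' h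
  have h2 : (univ.biUnion S).card ≤ N := by
    refine (card_le_univ _).trans ?_
    rw [Fintype.card_fin]
  have h3 : ∑ _g : G, (d + 1) = N := by
    rw [sum_const, card_univ, hG, hN, smul_eq_mul, mul_comm]
  have h4 : ∑ _g : G, (d + 1) ≤ ∑ g, (S g).card := sum_le_sum fun g _ => hc g
  have h5 : ∑ _g : G, (d + 1) = ∑ g, (S g).card := by omega
  constructor
  · intro g
    exact ((sum_eq_sum_iff_of_le fun g _ => hc g).1 h5 g (mem_univ _)).symm
  · intro i
    have h6 : univ.biUnion S = univ := by
      rw [← card_eq_iff_eq_univ, Fintype.card_fin]; omega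
    have : i ∈ univ.biUnion S := by rw [h6]; exact mem_univ _
    simpa using this

theorem lin_main (hN : N = (d + 1) * p ^ k) (a : Fin N → Fin (d + 1) → ℝ)
    (gp1 : ∀ s : Finset (Fin N), s.card = d + 1 → ∀ z, (∀ i ∈ s, a i ⬝ᵥ z = 0) → z = 0)
    (gp2 : ∀ s : Finset (Fin N), s.card ≤ d → ∀ x : Fin N → ℝ,
      ∑ i ∈ s, x i • a i ≠ Pi.single 0 1) :
    ∃ (c : Fin N → Fin k → ZMod p) (b : Fin (d + 1) → ℝ) (x : Fin N → ℝ), 0 < b 0 ∧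
      (∀ g, (univ.filter fun i => c i = g).card = d + 1) ∧
      (∀ i, 0 < x i * (a i ⬝ᵥ b)) ∧
      ∀ g, ∑ i ∈ univ.filter (fun i => c i = g), x i • a i = Pi.single 0 1 := by
  classical
  have hn : 0 < p ^ k := pow_pos (Fact.out : p.Prime).pos _
  have hN0 : 0 < N := by rw [hN]; positivity
  obtain ⟨t, ⟨ht1, ht2, S, hS, hS'⟩, ht⟩ := equalize (p := p) (k := k) hN0 (FF a) (FF_cont a) (FF_sh a)
  have hScard : d + 1 ≤ S.card := by
    have : (d + 1) * p ^ k = (p ^ k - 1) * (d + 1) + (d + 1) := by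
      obtain ⟨q, hq⟩ := Nat.exists_eq_succ_of_ne_zero hn.ne'
      rw [hq]; simp only [Nat.succ_sub_one]; rw [Nat.succ_eq_add_one]; ring
    omega
  obtain ⟨S₀, hS₀, hS₀c⟩ := exists_subset_card_eq hScard
  have hw0 : ∀ i, 0 ≤ wt t i := fun i => sum_nonneg fun g _ => (ht1 i g).1
  have hwS : ∀ i ∈ S, 0 < wt t i := by
    intro i hi
    obtain ⟨g, hg⟩ := hS' i hi
    have : t i g ≤ wt t i := single_le_sum (f := t i) (fun g _ => (ht1 i g).1) (mem_univ g)
    linarith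
  have hquad : ∀ z, z ⬝ᵥ (MM a t *ᵥ z) = ∑ i, wt t i * (a i ⬝ᵥ z) ^ 2 := by
    intro z
    rw [MM_mulVec, dotProduct_sum]
    apply sum_congr rfl
    intro i _
    rw [dotProduct_smul, dotProduct_comm z, smul_eq_mul]; ring
  have hpd : ∀ z, z ⬝ᵥ (MM a t *ᵥ z) = 0 → z = 0 := by
    intro z hz
    rw [hquad, sum_eq_zero_iff_of_nonneg fun i _ => mul_nonneg (hw0 i) (sq_nonneg _)] at hz
    refine gp1 S₀ hS₀c z fun i hi => ?_
    rcases mul_eq_zero.1 (hz i (mem_univ _)) with h | h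
    · exact absurd h (hwS i (hS₀ hi)).ne'
    · exact pow_eq_zero_iff (two_ne_zero) |>.1 h
  have hdet : (MM a t).det ≠ 0 := by
    intro h
    obtain ⟨z, hz, hz'⟩ := Matrix.exists_mulVec_eq_zero_iff.2 h
    exact hz (hpd z (by rw [hz', dotProduct_zero]))
  set b : Fin (d + 1) → ℝ := (MM a t).det⁻¹ • bb a t with hb
  have hMb' : MM a t *ᵥ bb a t = (MM a t).det • Pi.single 0 1 := by
    unfold bb
    rw [Matrix.mulVec_mulVec, Matrix.mul_adjugate, Matrix.smul_mulVec, Matrix.one_mulVec]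
  have hMb : MM a t *ᵥ b = Pi.single 0 1 := by
    rw [hb, Matrix.mulVec_smul, hMb', smul_smul, inv_mul_cancel₀ hdet, one_smul]
  have hb0 : 0 < b 0 := by
    have e1 : b ⬝ᵥ (MM a t *ᵥ b) = b 0 := by rw [hMb, dotProduct_single, mul_one]
    have e2 : 0 ≤ b 0 := by
      rw [← e1, hquad]
      exact sum_nonneg fun i _ => mul_nonneg (hw0 i) (sq_nonneg _)
    refine lt_of_le_of_ne e2 fun h => ?_
    have : b = 0 := hpd b (by rw [e1, ← h])
    rw [this, Matrix.mulVec_zero] at hMb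
    have := congrFun hMb 0
    simp at this
  let X : Fin N → (Fin k → ZMod p) → ℝ := fun i g => ((p ^ k : ℕ) : ℝ) * t i g * (a i ⬝ᵥ b)
  have hX : ∀ g, ∑ i, X i g • a i = Pi.single 0 1 := by
    intro g
    have e1 : ∀ κ, ((p ^ k : ℕ) : ℝ) * FF a t g κ = (MM a t).det * (Pi.single 0 1 : Fin (d + 1) → ℝ) κ := by
      intro κ
      rw [ht κ g]
      have := congrFun hMb' κ
      rw [Pi.smul_apply, smul_eq_mul] at this
      rw [← this, MM_mulVec, Finset.sum_apply]
      unfold FF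
      rw [sum_comm]
      apply sum_congr rfl
      intro i _
      rw [Pi.smul_apply, smul_eq_mul, ← sum_mul, ← sum_mul]
      rfl
    funext κ
    have e2 : (Pi.single 0 1 : Fin (d + 1) → ℝ) κ =
        (MM a t).det⁻¹ * (((p ^ k : ℕ) : ℝ) * FF a t g κ) := by
      rw [e1, ← mul_assoc, inv_mul_cancel₀ hdet, one_mul]
    rw [e2, Finset.sum_apply]
    unfold FF
    rw [mul_sum, mul_sum]
    apply sum_congr rfl
    intro i _
    simp only [X, hb, Pi.smul_apply, smul_eq_mul, dotProduct_smul]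
    ring
  let Sg : (Fin k → ZMod p) → Finset (Fin N) := fun g => univ.filter fun i => X i g ≠ 0
  have hXS : ∀ g, ∑ i ∈ Sg g, X i g • a i = Pi.single 0 1 := by
    intro g
    rw [← hX g]
    apply sum_subset (subset_univ _)
    intro i _ hi
    have : X i g = 0 := by simpa [Sg] using hi
    rw [this, zero_smul]
  have hdisj : ∀ g g', g ≠ g' → Disjoint (Sg g) (Sg g') := by
    intro g g' hg
    rw [Finset.disjoint_left]
    intro i h1 h2
    have h1' : X i g ≠ 0 := by simpa [Sg] using h1
    have h2' : X i g' ≠ 0 := by simpa [Sg] using h2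
    have := ht2 i g g' hg
    simp only [X, mul_ne_zero_iff] at h1' h2'
    exact (mul_ne_zero h1'.1.2 h2'.1.2) this
  have hcard : ∀ g, d + 1 ≤ (Sg g).card := by
    intro g
    by_contra h
    exact gp2 (Sg g) (by omega) (fun i => X i g) (hXS g)
  obtain ⟨hc1, hc2⟩ := count_lem (p ^ k) (by simp [ZMod.card]) Sg hN hdisj hcard
  choose c hc using hc2
  have hcS : ∀ g, (univ.filter fun i => c i = g) = Sg g := by
    intro g
    ext i
    rw [mem_filter]
    constructor
    · rintro ⟨_, rfl⟩; exact hc i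
    · intro hi
      refine ⟨mem_univ _, ?_⟩
      by_contra hne
      exact Finset.disjoint_left.1 (hdisj _ _ hne) (hc i) hi
  refine ⟨c, b, fun i => X i (c i), hb0, fun g => by rw [hcS, hc1], fun i => ?_, fun g => ?_⟩
  · have h1 : X i (c i) ≠ 0 := by simpa [Sg] using hc i
    simp only [X, mul_ne_zero_iff] at h1 ⊢
    have h2 : 0 < t i (c i) := lt_of_le_of_ne (ht1 i _).1 h1.1.2.symm
    have h3 : (0 : ℝ) < ((p ^ k : ℕ) : ℝ) := by exact_mod_cast hn
    have h4 : 0 < (a i ⬝ᵥ b) ^ 2 := by have := h1.2; positivity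
    calc (0 : ℝ) < ((p ^ k : ℕ) : ℝ) * t i (c i) * (a i ⬝ᵥ b) ^ 2 := by positivity
      _ = _ := by ring
  · rw [← hXS g, hcS]
    apply sum_congr rfl
    intro i hi
    rw [← hcS, mem_filter] at hi
    simp only [hi.2]

end LinA
end DT

namespace DT
open Finset

section Geo
open Matrix
variable {N d : ℕ}

noncomputable def lf (y : EuclideanSpace ℝ (Fin d)) : Fin (d + 1) → ℝ := Fin.cons 1 fun j => y j

theorem lf_zero (y : EuclideanSpace ℝ (Fin d)) : lf y 0 = 1 := rfl

theorem lf_inner (v y : EuclideanSpace ℝ (Fin d)) (c : ℝ) :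
    (Fin.cons (-c) fun j => v j : Fin (d + 1) → ℝ) ⬝ᵥ lf y = ⟪y, v⟫_ℝ - c := by
  unfold lf dotProduct
  rw [Fin.sum_univ_succ]
  simp only [Fin.cons_zero, Fin.cons_succ, PiLp.inner_apply]
  simp
  ring

theorem geo_gp1 (H : Fin N → Set (EuclideanSpace ℝ (Fin d))) (hgp : InGeneralPosition H)
    (a : Fin N → Fin (d + 1) → ℝ) (ha : ∀ i y, y ∈ H i ↔ a i ⬝ᵥ lf y = 0)
    (s : Finset (Fin N)) (hs : s.card = d + 1) (z : Fin (d + 1) → ℝ)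
    (hz : ∀ i ∈ s, a i ⬝ᵥ z = 0) : z = 0 := by
  by_cases h0 : z 0 = 0
  · obtain ⟨s', hs', hc⟩ := exists_subset_card_eq (show d ≤ s.card by omega)
    obtain ⟨x, hx, hu⟩ := hgp.1 s' hc
    let y : EuclideanSpace ℝ (Fin d) := WithLp.toLp 2 fun j => x j + z j.succ
    have hy : lf y = lf x + z := by
      funext j
      refine Fin.cases ?_ (fun j => ?_) j
      · simp [lf, h0]
      · simp [lf, y]
    have : y = x := by
      apply hu
      intro i hi
      rw [ha, hy, dotProduct_add, (ha i x).1 (hx i hi), hz i (hs' hi), add_zero]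
    rw [this] at hy
    exact left_eq_add.1 hy
  · exfalso
    apply hgp.2 s hs
    refine ⟨WithLp.toLp 2 fun j => (z 0)⁻¹ * z j.succ, fun i hi => ?_⟩
    rw [ha]
    have : lf (WithLp.toLp 2 fun j : Fin d => (z 0)⁻¹ * z j.succ) = (z 0)⁻¹ • z := by
      funext j
      refine Fin.cases ?_ (fun j => ?_) j
      · simp [lf, h0]
      · simp [lf]
    rw [this, dotProduct_smul, hz i hi, smul_zero]

theorem geo_gp2 (hN : d ≤ N) (H : Fin N → Set (EuclideanSpace ℝ (Fin d))) (hgp : InGeneralPosition H)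
    (a : Fin N → Fin (d + 1) → ℝ) (ha : ∀ i y, y ∈ H i ↔ a i ⬝ᵥ lf y = 0)
    (s : Finset (Fin N)) (hs : s.card ≤ d) (x : Fin N → ℝ) :
    ∑ i ∈ s, x i • a i ≠ Pi.single 0 1 := by
  intro h
  obtain ⟨s', hs', _, hc⟩ := exists_subsuperset_card_eq (subset_univ s) hs
    (by rw [card_univ, Fintype.card_fin]; exact hN)
  obtain ⟨y, hy, _⟩ := hgp.1 s' hc
  have h1 := congrArg (fun v => v ⬝ᵥ lf y) h
  simp only [sum_dotProduct, smul_dotProduct, single_dotProduct, lf_zero] at h1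
  rw [sum_eq_zero] at h1
  · norm_num at h1
  · intro i hi
    rw [(ha i y).1 (hy i (hs' hi)), smul_zero]

theorem geo_simplex (H : Fin N → Set (EuclideanSpace ℝ (Fin d))) (hgp : InGeneralPosition H)
    (a : Fin N → Fin (d + 1) → ℝ) (ha : ∀ i y, y ∈ H i ↔ a i ⬝ᵥ lf y = 0)
    (s : Finset (Fin N)) (hs : s.card = d + 1) (x : Fin N → ℝ)
    (hx : ∑ i ∈ s, x i • a i = Pi.single 0 1) (V : Set (EuclideanSpace ℝ (Fin d)))
    (hV : ∀ y, ∀ i ∈ s, (∀ j ∈ s, j ≠ i → y ∈ H j) → y ∈ V)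
    (b : EuclideanSpace ℝ (Fin d)) (hb : ∀ i ∈ s, 0 < x i * (a i ⬝ᵥ lf b)) :
    b ∈ interior (convexHull ℝ V) := by
  classical
  have hlf : Continuous (lf : EuclideanSpace ℝ (Fin d) → Fin (d + 1) → ℝ) := by
    refine continuous_pi fun j => ?_
    refine Fin.cases ?_ (fun j => ?_) j
    · simp only [lf_zero]; exact continuous_const
    · simp only [lf, Fin.cons_succ]; fun_prop
  have hsum : ∀ y, ∑ i ∈ s, x i * (a i ⬝ᵥ lf y) = 1 := by
    intro y
    have h1 := congrArg (fun v => v ⬝ᵥ lf y) hx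
    simpa only [sum_dotProduct, smul_dotProduct, single_dotProduct, lf_zero, smul_eq_mul, one_mul] using h1
  have hP : ∀ i, ∃ q : EuclideanSpace ℝ (Fin d), i ∈ s → ∀ j ∈ s, j ≠ i → q ∈ H j := by
    intro i
    by_cases hi : i ∈ s
    · obtain ⟨q, hq, _⟩ := hgp.1 (s.erase i) (by rw [card_erase_of_mem hi]; omega)
      exact ⟨q, fun _ j hj hne => hq j (mem_erase.2 ⟨hne, hj⟩)⟩
    · exact ⟨0, fun h => absurd h hi⟩
  choose P hP using hP
  have hPx : ∀ i ∈ s, x i * (a i ⬝ᵥ lf (P i)) = 1 := by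
    intro i hi
    rw [← hsum (P i), Finset.sum_eq_single i]
    · intro j hj hne
      rw [(ha j _).1 (hP i hi j hj hne), mul_zero]
    · exact fun h => absurd hi h
  refine mem_interior.2 ⟨⋂ i ∈ s, {y | 0 < x i * (a i ⬝ᵥ lf y)}, ?_, ?_, ?_⟩
  · intro y hy
    simp only [Set.mem_iInter, Set.mem_setOf_eq] at hy
    let μ : Fin N → ℝ := fun i => x i * (a i ⬝ᵥ lf y)
    have hz : lf y - ∑ i ∈ s, μ i • lf (P i) = 0 := by
      refine geo_gp1 H hgp a ha s hs _ fun j hj => ?_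
      rw [dotProduct_sub, dotProduct_sum, Finset.sum_eq_single j]
      · rw [dotProduct_smul, smul_eq_mul]
        have := hPx j hj
        calc _ = (a j ⬝ᵥ lf y) - (x j * (a j ⬝ᵥ lf (P j))) * (a j ⬝ᵥ lf y) := by simp only [μ]; ring
          _ = 0 := by rw [this]; ring
      · intro i hi hne
        rw [dotProduct_smul, (ha j _).1 (hP i hi j hj hne.symm), smul_zero]
      · exact fun h => absurd hj h
    have hy' : y = ∑ i ∈ s, μ i • P i := by
      ext j
      have := congrFun (sub_eq_zero.1 hz) j.succ
      simpa [lf, Finset.sum_apply] using this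
    rw [hy']
    refine (convex_convexHull ℝ V).sum_mem (fun i hi => (hy i hi).le) (hsum y) fun i hi => ?_
    exact subset_convexHull ℝ V (hV _ i hi (hP i hi))
  · refine isOpen_biInter_finset fun i _ => ?_
    exact isOpen_lt continuous_const (continuous_const.mul (continuous_const.dotProduct hlf))
  · simp only [Set.mem_iInter, Set.mem_setOf_eq]
    exact hb

end Geo
end DT

/-- The dual Tverberg theorem for prime powers: `(d+1)n` hyperplanes in general
position in `ℝ^d`, `n` a prime power, can be partitioned into `n` subfamilies of
`d+1` hyperplanes each, so that the simplexes formed by the subfamilies have a common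
interior point. The partition is encoded by a labeling `c` all of whose fibers have
`d+1` elements. -/
theorem dual_tverberg_prime_power (d n : ℕ) (hd : 1 ≤ d)
    (hn : ∃ p k : ℕ, p.Prime ∧ n = p ^ k)
    (H : Fin ((d + 1) * n) → Set (EuclideanSpace ℝ (Fin d)))
    (hH : ∀ i, IsHyperplane (H i))
    (hgp : InGeneralPosition H) :
    ∃ c : Fin ((d + 1) * n) → Fin n,
      (∀ m : Fin n, {i | c i = m}.ncard = d + 1) ∧
      ∃ b : EuclideanSpace ℝ (Fin d), ∀ m : Fin n,
        b ∈ interior (convexHull ℝ (SimplexVertices H c m)) := by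
  classical
  obtain ⟨p, k, hp, rfl⟩ := hn
  haveI : Fact p.Prime := ⟨hp⟩
  choose v c hv hHc using hH
  let a : Fin ((d + 1) * p ^ k) → Fin (d + 1) → ℝ := fun i => Fin.cons (-(c i)) fun j => v i j
  have ha : ∀ i y, y ∈ H i ↔ dotProduct (a i) (DT.lf y) = 0 := by
    intro i y
    rw [DT.lf_inner, hHc i, sub_eq_zero]
    rfl
  have hN : d ≤ (d + 1) * p ^ k := by
    have : 0 < p ^ k := pow_pos hp.pos _
    nlinarith
  obtain ⟨c', b, x, hb0, hc1, hc2, hc3⟩ := DT.lin_main (p := p) (k := k) rfl a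
    (DT.geo_gp1 H hgp a ha) (DT.geo_gp2 hN H hgp a ha)
  have hcard : Fintype.card (Fin k → ZMod p) = p ^ k := by simp [ZMod.card]
  let e : (Fin k → ZMod p) ≃ Fin (p ^ k) := Fintype.equivFinOfCardEq hcard
  have hfib : ∀ m i, e (c' i) = m ↔ c' i = e.symm m := fun m i => by
    rw [Equiv.eq_symm_apply]
  refine ⟨fun i => e (c' i), fun m => ?_, WithLp.toLp 2 (fun j => (b 0)⁻¹ * b j.succ), fun m => ?_⟩
  · refine Eq.trans ?_ (hc1 (e.symm m))
    rw [← Set.ncard_coe_finset]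
    congr 1
    ext i
    simp [hfib]
  · refine DT.geo_simplex H hgp a ha _ (hc1 (e.symm m)) x (hc3 _) _ ?_ _ ?_
    · intro y i hi hy
      rw [Finset.mem_filter] at hi
      refine ⟨i, (hfib m i).2 hi.2, fun j hj hne => hy j ?_ hne⟩
      rw [Finset.mem_filter]
      exact ⟨Finset.mem_univ _, (hfib m j).1 hj⟩
    · intro i _
      have hl : DT.lf (WithLp.toLp 2 fun j : Fin d => (b 0)⁻¹ * b j.succ) = (b 0)⁻¹ • b := by
        funext j
        refine Fin.cases ?_ (fun j => ?_) j
        · simp [DT.lf, hb0.ne']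
        · simp [DT.lf]
      rw [hl, dotProduct_smul, smul_eq_mul]
      have := hc2 i
      calc (0 : ℝ) < (b 0)⁻¹ * (x i * (dotProduct (a i) b)) := by positivity
        _ = _ := by ring
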